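/- arXiv:2503.18219 — 3 statements merged into one kernel-verified Lean document; each statement's English description precedes it below -/
import Mathlib

section
/- Let ℓ: ℕ → ℕ∪{∞} be non-decreasing with ℓ* := sup_n ℓ(n) ≥ 4, let X be a separable Banach space with a fixed sequence {ℓ_k}_{k∈ℕ} ⊂ X* whose span is dense in X*, and let K ⊂ X be a compact set that is convex and not contained in any finite-dimensional subspace of X. Then for every α > 0, the optimal randomized order for uniform approximation satisfies β*(𝐔^{α,∞}_{ℓ,DON}, C(K)) = 0. -/
open MeasureTheory ENNReal

noncomputable section

/-- The ReLU activation function. -/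
def relu (x : ℝ) : ℝ := max x 0

/-- A (fully connected feed-forward) neural network: a tuple of affine layers.
`L` is the depth (number of affine maps), `dims j` the width of layer `j`
(only `dims 0, …, dims L` are relevant), `A j`/`b j` the weight matrix and bias
of the `(j+1)`-th affine map. -/
structure ReLUNet where
  L : ℕ
  dims : ℕ → ℕ
  A : (j : ℕ) → Matrix (Fin (dims (j + 1))) (Fin (dims j)) ℝ
  b : (j : ℕ) → Fin (dims (j + 1)) → ℝ

namespace ReLUNet

/-- The hidden representation after `j` layers, each affine map followed by ReLU. -/
def hidden (ψ : ReLUNet) : (j : ℕ) → (Fin (ψ.dims 0) → ℝ) → Fin (ψ.dims j) → ℝ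
  | 0, x => x
  | (j + 1), x => fun i => relu ((∑ k, ψ.A j i k * ψ.hidden j x k) + ψ.b j i)

/-- The ReLU realization `R_σ ψ = T_L ∘ (σ ∘ T_{L-1}) ∘ ⋯ ∘ (σ ∘ T_1)`:
the final affine map is applied without activation. -/
def realize (ψ : ReLUNet) (x : Fin (ψ.dims 0) → ℝ) (i : Fin (ψ.dims (ψ.L - 1 + 1))) : ℝ :=
  (∑ k, ψ.A (ψ.L - 1) i k * ψ.hidden (ψ.L - 1) x k) + ψ.b (ψ.L - 1) i

open Classical in
/-- `W ψ`: the number of nonzero weights and biases of `ψ`. -/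
def W (ψ : ReLUNet) : ℕ :=
  ∑ j ∈ Finset.range ψ.L,
    ((((Finset.univ : Finset (Fin (ψ.dims (j + 1)) × Fin (ψ.dims j))).filter
        fun p => ψ.A j p.1 p.2 ≠ 0).card)
      + (((Finset.univ : Finset (Fin (ψ.dims (j + 1)))).filter fun i => ψ.b j i ≠ 0).card))

/-- All weight and bias entries have magnitude at most 1, i.e. `‖ψ‖_NN ≤ 1`. -/
def normBdd (ψ : ReLUNet) : Prop :=
  ∀ j < ψ.L, (∀ i k, |ψ.A j i k| ≤ 1) ∧ (∀ i, |ψ.b j i| ≤ 1)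

end ReLUNet

/-- `Σ_{d,n}^ℓ` : realizations of ReLU networks `ℝ^d → ℝ` with at most `n` nonzero
weights, depth at most `ℓ n`, and weight magnitudes at most `1`. -/
def SigmaSet (d n : ℕ) (ℓ : ℕ → ℕ∞) : Set ((Fin d → ℝ) → ℝ) :=
  { g | ∃ ψ : ReLUNet, ∃ h0 : ψ.dims 0 = d, ∃ hout : ψ.dims (ψ.L - 1 + 1) = 1,
      1 ≤ ψ.L ∧ ψ.W ≤ n ∧ (ψ.L : ℕ∞) ≤ ℓ n ∧ ψ.normBdd ∧
      ∀ x : Fin d → ℝ, g x = ψ.realize (fun i => x (Fin.cast h0 i)) (Fin.cast hout.symm 0) }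

/-- The sup-distance (in `ℝ≥0∞`) between two functions over a set `D`. -/
def supDist {d : ℕ} (D : Set (Fin d → ℝ)) (f g : (Fin d → ℝ) → ℝ) : ℝ≥0∞ :=
  ⨆ x ∈ D, ENNReal.ofReal |f x - g x|

/-- The unit ball `U^{α,∞}_ℓ(D)` of the neural network approximation space:
functions bounded by `1` on `D` which are approximated in `L^∞(D)` at rate `n^{-α}`
by networks from `Σ_{d,n}^ℓ`. -/
def UnitBall (d : ℕ) (α : ℝ) (ℓ : ℕ → ℕ∞) (D : Set (Fin d → ℝ)) :
    Set ((Fin d → ℝ) → ℝ) :=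
  { f | (∀ x ∈ D, |f x| ≤ 1) ∧
      ∀ n : ℕ, 1 ≤ n →
        (⨅ g ∈ SigmaSet d n ℓ, supDist D f g) ≤ ENNReal.ofReal ((n : ℝ) ^ (-α)) }

/-- `A` is a deterministic method using `N` point measurements (taken from `D`) on `U`. -/
def IsDetMethod {X Y : Type*} (U : Set (X → ℝ)) (D : Set X) (N : ℕ)
    (A : (X → ℝ) → Y) : Prop :=
  ∃ pts : Fin N → X, (∀ j, pts j ∈ D) ∧
    ∃ Q : (Fin N → ℝ) → Y, ∀ f ∈ U, A f = Q fun j => f (pts j)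

/-- The `L^p(μ)`-error between `f` and `g` (with `p = ∞` giving the essential sup). -/
def lpError {X : Type*} [MeasurableSpace X] (p : ℝ≥0∞) (μ : Measure X)
    (f g : X → ℝ) : ℝ≥0∞ :=
  eLpNorm (fun x => f x - g x) p μ

/-- The optimal randomized error `e_N^{ran}(U, L^p(μ))` using (in expectation) `N` point
samples drawn from `D`. -/
def ranError {X : Type*} [MeasurableSpace X] (U : Set (X → ℝ)) (D : Set X)
    (p : ℝ≥0∞) (μ : Measure X) (N : ℕ) : ℝ≥0∞ :=
  ⨅ (Ω : Type) (_ : MeasurableSpace Ω) (P : Measure Ω) (_ : IsProbabilityMeasure P)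
    (A : Ω → (X → ℝ) → (X → ℝ)) (Ncnt : Ω → ℕ) (_ : Measurable Ncnt)
    (_ : ∫⁻ ω, (Ncnt ω : ℝ≥0∞) ∂P ≤ N)
    (_ : ∀ ω, IsDetMethod U D (Ncnt ω) (A ω))
    (_ : ∀ f ∈ U, Measurable fun ω => lpError p μ f (A ω f)),
    ⨆ f ∈ U, ∫⁻ ω, lpError p μ f (A ω f) ∂P

/-- The optimal randomized order of convergence `β_*(U, L^p(μ))`. -/
def betaStar {X : Type*} [MeasurableSpace X] (U : Set (X → ℝ)) (D : Set X)
    (p : ℝ≥0∞) (μ : Measure X) : ℝ :=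
  sSup { β : ℝ | 0 ≤ β ∧ ∃ C : ℝ, 0 < C ∧
    ∀ N : ℕ, 1 ≤ N → ranError U D p μ N ≤ ENNReal.ofReal (C * (N : ℝ) ^ (-β)) }

/-- The sup-norm error `‖f - g‖_{C(K)}` over a set `K` (in `ℝ≥0∞`). -/
def supError {X : Type*} (K : Set X) (f g : X → ℝ) : ℝ≥0∞ :=
  ⨆ u ∈ K, ENNReal.ofReal |f u - g u|

/-- The optimal randomized error `e_N^{ran}(U, C(K))` for uniform approximation on `K`. -/
def ranErrorSup {X : Type*} (U : Set (X → ℝ)) (K : Set X) (N : ℕ) : ℝ≥0∞ :=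
  ⨅ (Ω : Type) (_ : MeasurableSpace Ω) (P : Measure Ω) (_ : IsProbabilityMeasure P)
    (A : Ω → (X → ℝ) → (X → ℝ)) (Ncnt : Ω → ℕ) (_ : Measurable Ncnt)
    (_ : ∫⁻ ω, (Ncnt ω : ℝ≥0∞) ∂P ≤ N)
    (_ : ∀ ω, IsDetMethod U Set.univ (Ncnt ω) (A ω))
    (_ : ∀ f ∈ U, Measurable fun ω => supError K f (A ω f)),
    ⨆ f ∈ U, ∫⁻ ω, supError K f (A ω f) ∂P

/-- The optimal randomized order of convergence `β_*(U, C(K))`. -/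
def betaStarSup {X : Type*} (U : Set (X → ℝ)) (K : Set X) : ℝ :=
  sSup { β : ℝ | 0 ≤ β ∧ ∃ C : ℝ, 0 < C ∧
    ∀ N : ℕ, 1 ≤ N → ranErrorSup U K N ≤ ENNReal.ofReal (C * (N : ℝ) ^ (-β)) }

/-- `Σ^ℓ_{n,DON}` : DeepONets `Ψ = ψ ∘ L_{d₀}`, where `L_{d₀}(u) = (ℓ_1(u),…,ℓ_{d₀}(u))`
and `ψ` is a ReLU network with input dimension `d₀`, `max(W(ψ), d₀) ≤ n`, depth at most
`ℓ(n)` and weight magnitudes at most `1`. -/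
def DONSigma {X : Type*} [NormedAddCommGroup X] [NormedSpace ℝ X]
    (lk : ℕ → X →L[ℝ] ℝ) (n : ℕ) (ℓ : ℕ → ℕ∞) : Set (X → ℝ) :=
  { G | ∃ d₀ : ℕ, d₀ ≤ n ∧ ∃ g ∈ SigmaSet d₀ n ℓ,
      ∀ u, G u = g fun k : Fin d₀ => lk (k : ℕ) u }

/-- The unit ball `𝐔^{α,∞}_{ℓ,DON}` of the DeepONet approximation space: continuous
`G : X → ℝ` with `sup_u |G(u)| ≤ 1` approximated uniformly at rate `n^{-α}` by
elements of `Σ^ℓ_{n,DON}`. -/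
def DONUnitBall {X : Type*} [NormedAddCommGroup X] [NormedSpace ℝ X]
    (lk : ℕ → X →L[ℝ] ℝ) (α : ℝ) (ℓ : ℕ → ℕ∞) : Set (X → ℝ) :=
  { G | Continuous G ∧ (∀ u, |G u| ≤ 1) ∧
      ∀ n : ℕ, 1 ≤ n →
        (⨅ Ψ ∈ DONSigma lk n ℓ, ⨆ u, ENNReal.ofReal |G u - Ψ u|) ≤
          ENNReal.ofReal ((n : ℝ) ^ (-α)) }


/-- Three-layer network used for bumps. -/
def bumpNet (D m : ℕ) (A : Fin m → Fin D → ℝ) (b : Fin m → ℝ) (h : ℝ) : ReLUNet where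
  L := 3
  dims := fun j => match j with
    | 0 => D
    | 1 => m
    | _ => 1
  A := fun j => match j with
    | 0 => fun i k => A i k
    | 1 => fun _ _ => -1
    | (_ + 2) => fun _ _ => h
  b := fun j => match j with
    | 0 => fun i => b i
    | 1 => fun _ => 1
    | (_ + 2) => fun _ => 0

lemma bumpNet_mem (D m n : ℕ) (ℓ : ℕ → ℕ∞) (A : Fin m → Fin D → ℝ) (b : Fin m → ℝ) (h : ℝ)
    (hA : ∀ i k, |A i k| ≤ 1) (hb : ∀ i, |b i| ≤ 1) (hh : |h| ≤ 1)
    (hn : m * D + m + m + 3 ≤ n) (hl : 3 ≤ ℓ n) :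
    (fun x : Fin D → ℝ => h * relu (1 - ∑ r, relu ((∑ k, A r k * x k) + b r))) ∈
      SigmaSet D n ℓ := by
  classical
  refine ⟨bumpNet D m A b h, rfl, rfl, by simp [bumpNet], ?_, hl, ?_, ?_⟩
  · refine le_trans ?_ hn
    unfold ReLUNet.W
    calc _ ≤ ∑ j ∈ Finset.range 3, ((bumpNet D m A b h).dims (j+1) * (bumpNet D m A b h).dims j
            + (bumpNet D m A b h).dims (j+1)) := by
          apply Finset.sum_le_sum
          intro j _
          apply add_le_add
          · refine (Finset.card_filter_le _ _).trans ?_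
            simp
          · refine (Finset.card_filter_le _ _).trans ?_
            simp
      _ ≤ _ := by
          simp [Finset.sum_range_succ, bumpNet]
          omega
  · intro j hj
    have hj3 : j < 3 := hj
    interval_cases j
    · exact ⟨hA, hb⟩
    · exact ⟨fun _ _ => by simp [bumpNet], fun _ => by simp [bumpNet]⟩
    · exact ⟨fun _ _ => hh, fun _ => by simp [bumpNet]⟩
  · intro x
    change _ = (∑ k : Fin 1, h * relu ((∑ k' : Fin m, (-1) * relu ((∑ k'' : Fin D, A k' k'' * x k'') + b k')) + 1)) + 0
    simp only [Finset.univ_unique, Finset.sum_singleton, add_zero, neg_mul, one_mul,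
      Finset.sum_neg_distrib]
    congr 2
    ring

/-- zero network -/
def zeroNet : ReLUNet where
  L := 1
  dims := fun j => j
  A := fun _ _ _ => 0
  b := fun _ _ => 0

lemma zero_mem_sigma {X : Type*} [NormedAddCommGroup X] [NormedSpace ℝ X]
    (lk : ℕ → X →L[ℝ] ℝ) (n : ℕ) (ℓ : ℕ → ℕ∞) (hl : 1 ≤ ℓ n) :
    (fun _ => 0 : X → ℝ) ∈ DONSigma lk n ℓ := by
  refine ⟨0, Nat.zero_le _, fun _ => 0, ⟨zeroNet, rfl, rfl, le_rfl, ?_, ?_, ?_, ?_⟩, fun _ => rfl⟩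
  · simp [ReLUNet.W, zeroNet]
  · simpa [zeroNet] using hl
  · intro j _
    simp [zeroNet]
  · intro x
    simp [ReLUNet.realize, zeroNet]

lemma mem_ball {X : Type*} [NormedAddCommGroup X] [NormedSpace ℝ X]
    (lk : ℕ → X →L[ℝ] ℝ) (n : ℕ) (ℓ : ℕ → ℕ∞) (α : ℝ) (hα : 0 < α) (hl : 1 ≤ ℓ 1)
    (hmono : Monotone ℓ) (G : X → ℝ) (hn : 1 ≤ n)
    (hG : ∀ n', n ≤ n' → G ∈ DONSigma lk n' ℓ) (hc : Continuous G)
    (hb : ∀ u, |G u| ≤ (n : ℝ) ^ (-α)) : G ∈ DONUnitBall lk α ℓ := by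
  have hn' : (1 : ℝ) ≤ n := by exact_mod_cast hn
  refine ⟨hc, fun u => (hb u).trans (Real.rpow_le_one_of_one_le_of_nonpos hn' (by linarith)), ?_⟩
  intro k hk
  by_cases hkn : n ≤ k
  · refine (iInf₂_le G (hG k hkn)).trans ?_
    simp
  · refine (iInf₂_le _ (zero_mem_sigma lk k ℓ (hl.trans (hmono hk)))).trans ?_
    refine iSup_le fun u => ENNReal.ofReal_le_ofReal ?_
    rw [sub_zero]
    refine (hb u).trans ?_
    apply Real.rpow_le_rpow_of_nonpos (by exact_mod_cast hk) _ (by linarith)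
    exact_mod_cast (not_le.mp hkn).le

lemma lower_bound {X : Type*} (U : Set (X → ℝ)) (K : Set X) (N : ℕ) {J : Type*} [Fintype J]
    (G : J → X → ℝ) (h : ℝ) (hh : 0 ≤ h) (h0 : (fun _ => 0) ∈ U) (hG : ∀ j, G j ∈ U)
    (hdisj : ∀ u j j', G j u ≠ 0 → G j' u ≠ 0 → j = j')
    (hpk : ∀ j, ∃ u ∈ K, G j u = h) (hJ : 2 * N ≤ Fintype.card J) (hN : 1 ≤ N) :
    ENNReal.ofReal (h / 4) ≤ ranErrorSup U K N := by
  classical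
  unfold ranErrorSup
  refine le_iInf fun Ω => le_iInf fun mΩ => le_iInf fun P => le_iInf fun hP => le_iInf fun A =>
    le_iInf fun Nc => le_iInf fun hNm => le_iInf fun hNi => le_iInf fun hdet => le_iInf fun hmeas => ?_
  set e := ⨆ f ∈ U, ∫⁻ ω, supError K f (A ω f) ∂P with he
  have he' : ∀ f ∈ U, ∫⁻ ω, supError K f (A ω f) ∂P ≤ e := fun f hf =>
    le_iSup₂ (f := fun f (_ : f ∈ U) => ∫⁻ ω, supError K f (A ω f) ∂P) f hf
  -- pointwise bound
  have hpt : ∀ ω, (Fintype.card J : ℝ≥0∞) * ENNReal.ofReal h ≤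
      (∑ j, (supError K (G j) (A ω (G j)) + supError K (fun _ => 0) (A ω (fun _ => 0))))
        + ENNReal.ofReal h * (Nc ω : ℝ≥0∞) := by
    intro ω
    obtain ⟨pts, -, Q, hQ⟩ := hdet ω
    set bad : Finset J := Finset.univ.filter fun j => ∃ i, G j (pts i) ≠ 0 with hbad
    have hcard : bad.card ≤ Nc ω := by
      have hch : ∀ j : bad, ∃ i, G j (pts i) ≠ 0 := fun j => (Finset.mem_filter.mp j.2).2
      choose φ hφ using hch
      have hinj : Function.Injective φ := by
        intro a b hab
        apply Subtype.ext
        apply hdisj (pts (φ a)) _ _ (hφ a)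
        rw [hab]; exact hφ b
      have := Fintype.card_le_of_injective φ hinj
      simpa using this
    have hgood : ∀ j, ENNReal.ofReal h ≤
        (supError K (G j) (A ω (G j)) + supError K (fun _ => 0) (A ω (fun _ => 0)))
          + (if j ∈ bad then ENNReal.ofReal h else 0) := by
      intro j
      split_ifs with hj
      · exact le_add_self
      · have hz : ∀ i, G j (pts i) = 0 := by
          intro i
          by_contra hne
          exact hj (Finset.mem_filter.mpr ⟨Finset.mem_univ _, i, hne⟩)
        have hAeq : A ω (G j) = A ω (fun _ => 0) := by
          rw [hQ _ (hG j), hQ _ h0]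
          congr 1
          funext i
          exact hz i
        rw [add_zero, hAeq]
        obtain ⟨u, huK, hu⟩ := hpk j
        set a := A ω (fun _ => 0) u with ha
        have h1 : ENNReal.ofReal |h - a| ≤ supError K (G j) (A ω (fun _ => 0)) := by
          rw [← hu, ha]
          exact le_iSup₂ (f := fun u (_ : u ∈ K) => ENNReal.ofReal |G j u - A ω (fun _ => 0) u|) u huK
        have h2 : ENNReal.ofReal |0 - a| ≤ supError K (fun _ => 0) (A ω (fun _ => 0)) :=
          le_iSup₂ (f := fun u (_ : u ∈ K) => ENNReal.ofReal |0 - A ω (fun _ => 0) u|) u huK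
        refine le_trans ?_ (add_le_add h1 h2)
        rw [← ENNReal.ofReal_add (abs_nonneg _) (abs_nonneg _)]
        apply ENNReal.ofReal_le_ofReal
        have e1 := le_abs_self (h - a)
        have e2 := neg_le_abs (0 - a)
        linarith
    calc (Fintype.card J : ℝ≥0∞) * ENNReal.ofReal h = ∑ _j : J, ENNReal.ofReal h := by simp
      _ ≤ _ := Finset.sum_le_sum fun j _ => hgood j
      _ = (∑ j, (supError K (G j) (A ω (G j)) + supError K (fun _ => 0) (A ω (fun _ => 0))))
          + (bad.card : ℝ≥0∞) * ENNReal.ofReal h := by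
          rw [Finset.sum_add_distrib]
          congr 1
          rw [Finset.sum_ite_mem]
          simp
      _ ≤ _ := by
          rw [mul_comm]
          gcongr
  have hint := lintegral_mono (μ := P) hpt
  rw [lintegral_const, measure_univ, mul_one, lintegral_add_right _ (by
      apply Measurable.const_mul
      exact (measurable_of_countable _).comp hNm), lintegral_finsetSum _ (fun j _ => by
      exact (hmeas _ (hG j)).add (hmeas _ h0)), lintegral_const_mul _ (by
      exact (measurable_of_countable _).comp hNm)] at hint
  have hfin : (Fintype.card J : ℝ≥0∞) * ENNReal.ofReal h ≤
      (Fintype.card J : ℝ≥0∞) * (2 * e) + ENNReal.ofReal h * N := by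
    refine hint.trans ?_
    gcongr
    calc _ ≤ ∑ _j : J, (2 * e) := by
          apply Finset.sum_le_sum
          intro j _
          rw [lintegral_add_right _ (hmeas _ h0), two_mul]
          exact add_le_add (he' _ (hG j)) (he' _ h0)
      _ = _ := by simp
  by_cases hetop : e = ⊤
  · rw [hetop]; exact le_top
  rw [ENNReal.ofReal_le_iff_le_toReal hetop]
  have hfin' : (Fintype.card J : ℝ) * h ≤ (Fintype.card J : ℝ) * (2 * e.toReal) + h * N := by
    have := ENNReal.toReal_mono (by finiteness) hfin
    rw [ENNReal.toReal_add (by finiteness) (by finiteness)] at this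
    simpa [ENNReal.toReal_ofReal hh] using this
  have hJ' : 2 * (N : ℝ) ≤ (Fintype.card J : ℝ) := by exact_mod_cast hJ
  have hN' : (1 : ℝ) ≤ N := by exact_mod_cast hN
  by_contra hlt
  push Not at hlt
  have : (Fintype.card J : ℝ) * (h - 2 * e.toReal - h / 2) ≤ 0 := by nlinarith
  nlinarith

lemma geom {X : Type*} [NormedAddCommGroup X] [NormedSpace ℝ X]
    (lk : ℕ → X →L[ℝ] ℝ)
    (hdense : Dense (Submodule.span ℝ (Set.range lk) : Set (X →L[ℝ] ℝ)))
    (K : Set X)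
    (hfd : ¬ ∃ S : Submodule ℝ X, FiniteDimensional ℝ S ∧ K ⊆ (S : Set X)) (d : ℕ) :
    ∃ v0 ∈ K, ∃ w : Fin d → X, (∀ i, v0 + w i ∈ K) ∧ ∃ (D : ℕ) (c : Fin d → Fin D → ℝ),
      ∀ i j, (∑ k, c i k * lk k (w j)) = if i = j then 1 else 0 := by
  classical
  have hne : K.Nonempty := by
    by_contra h
    rw [Set.not_nonempty_iff_eq_empty] at h
    exact hfd ⟨⊥, inferInstance, by simp [h]⟩
  obtain ⟨v0, hv0⟩ := hne
  obtain ⟨b, hbs, hbspan, hbli⟩ := exists_linearIndependent ℝ ((fun x => x - v0) '' K)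
  have hbinf : b.Infinite := by
    intro hfin
    apply hfd
    refine ⟨Submodule.span ℝ b ⊔ Submodule.span ℝ {v0}, ?_, ?_⟩
    · have := FiniteDimensional.span_of_finite ℝ hfin
      infer_instance
    · intro x hx
      have h1 : x - v0 ∈ Submodule.span ℝ b := by
        rw [hbspan]; exact Submodule.subset_span ⟨x, hx, rfl⟩
      have h2 : v0 ∈ Submodule.span ℝ ({v0} : Set X) := Submodule.mem_span_singleton_self _
      have := Submodule.add_mem_sup h1 h2
      simpa using this
  obtain ⟨φ⟩ : Nonempty (ℕ ↪ b) := ⟨hbinf.natEmbedding⟩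
  let w : Fin d → X := fun i => φ i
  have hw : LinearIndependent ℝ w :=
    hbli.comp (fun i : Fin d => φ i) (fun a b hab => Fin.ext (φ.injective hab))
  refine ⟨v0, hv0, w, ?_, ?_⟩
  · intro i
    obtain ⟨x, hx, hxe⟩ := hbs (φ i).2
    have : v0 + w i = x := by
      change v0 + (φ i : X) = x
      rw [← hxe]; simp
    rw [this]; exact hx
  let S := Submodule.span ℝ (Set.range lk)
  let Φ : S →ₗ[ℝ] (Fin d → ℝ) :=
    { toFun := fun f i => (f : X →L[ℝ] ℝ) (w i)
      map_add' := fun f g => by ext i; simp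
      map_smul' := fun r f => by ext i; simp }
  have hsurj : LinearMap.range Φ = ⊤ := by
    by_contra hlt
    obtain ⟨g, hg0, hg⟩ := Submodule.exists_le_ker_of_lt_top _ (lt_top_iff_ne_top.mpr hlt)
    apply hg0
    have hgs : ∀ y : Fin d → ℝ, g y = ∑ i, y i * g (Pi.single i 1) := by
      intro y
      conv_lhs => rw [pi_eq_sum_univ' y]
      simp [map_sum]
    set z : X := ∑ i, g (Pi.single i 1) • w i with hz
    have hSz : ∀ f ∈ S, f z = 0 := by
      intro f hf
      have : g (Φ ⟨f, hf⟩) = 0 := hg ⟨_, rfl⟩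
      rw [hgs] at this
      rw [hz, map_sum, ← this]
      refine Finset.sum_congr rfl fun i _ => ?_
      simp [Φ, mul_comm]
    have hall : ∀ f : X →L[ℝ] ℝ, f z = 0 := by
      have hcl : IsClosed {f : X →L[ℝ] ℝ | f z = 0} :=
        isClosed_eq (ContinuousLinearMap.apply ℝ ℝ z).continuous continuous_const
      intro f
      have := hcl.closure_subset_iff.mpr (show (S : Set (X →L[ℝ] ℝ)) ⊆ _ from hSz)
      exact this (hdense f)
    have hz0 : z = 0 := by
      by_contra hzne
      obtain ⟨f, -, hf⟩ := exists_dual_vector ℝ z (norm_ne_zero_iff.mpr hzne)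
      rw [hall f] at hf
      exact hzne (norm_eq_zero.mp (by exact_mod_cast hf.symm))
    have hco := Fintype.linearIndependent_iff.mp hw _ (hz.symm.trans hz0)
    ext i
    simpa using hco i
  have hex : ∀ i : Fin d, ∃ f : ℕ →₀ ℝ, ∀ j, (f.sum fun k a => a * lk k (w j)) =
      if i = j then 1 else 0 := by
    intro i
    obtain ⟨⟨f, hf⟩, hfe⟩ := LinearMap.range_eq_top.mp hsurj (Pi.single i 1)
    obtain ⟨c, hc⟩ := (Finsupp.mem_span_range_iff_exists_finsupp).mp hf
    refine ⟨c, fun j => ?_⟩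
    have h1 : f (w j) = (Pi.single i 1 : Fin d → ℝ) j := congrFun hfe j
    rw [← hc] at h1
    rw [Pi.single_apply] at h1
    simp only [eq_comm (a := i)]
    rw [← h1, Finsupp.sum, Finsupp.sum]
    simp
  choose f hf using hex
  obtain ⟨D, hD⟩ : ∃ D : ℕ, ∀ i, (f i).support ⊆ Finset.range D := by
    obtain ⟨D, hD⟩ := (Finset.univ.biUnion fun i => (f i).support).exists_nat_subset_range
    exact ⟨D, fun i => (Finset.subset_biUnion_of_mem (fun i => (f i).support) (Finset.mem_univ i)).trans hD⟩
  refine ⟨D, fun i k => f i k, fun i j => ?_⟩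
  rw [← hf i j, Finsupp.sum_of_support_subset _ (hD i) _ (by simp)]
  exact Fin.sum_univ_eq_sum_range (fun k => f i k * lk k (w j)) D


lemma relu_add_neg (a : ℝ) : relu a + relu (-a) = |a| := by
  unfold relu
  rcases le_total 0 a with h | h
  · rw [max_eq_left h, max_eq_right (by linarith), abs_of_nonneg h, add_zero]
  · rw [max_eq_right h, max_eq_left (by linarith), abs_of_nonpos h, zero_add]

lemma relu_cont : Continuous relu := continuous_id.max continuous_const

lemma bumps {X : Type*} [NormedAddCommGroup X] [NormedSpace ℝ X]
    (lk : ℕ → X →L[ℝ] ℝ) (ℓ : ℕ → ℕ∞) (hmono : Monotone ℓ) (hl : 1 ≤ ℓ 1)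
    (n0 : ℕ) (hn0 : 3 ≤ ℓ n0)
    (K : Set X) (hconv : Convex ℝ K) (α : ℝ) (hα : 0 < α) (d : ℕ) (hd : 1 ≤ d)
    (v0 : X) (hv0 : v0 ∈ K) (w : Fin d → X) (hw : ∀ i, v0 + w i ∈ K) (D : ℕ)
    (c : Fin d → Fin D → ℝ)
    (hc : ∀ i j, (∑ k, c i k * lk k (w j)) = if i = j then 1 else 0) :
    ∃ R : ℕ, 1 ≤ R ∧ ∀ M : ℕ, 1 ≤ M → ∃ G : (Fin d → Fin M) → X → ℝ,
      (∀ j, G j ∈ DONUnitBall lk α ℓ) ∧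
      (∀ u j j', G j u ≠ 0 → G j' u ≠ 0 → j = j') ∧
      (∀ j, ∃ u ∈ K, G j u = ((R * M : ℕ) : ℝ) ^ (-α)) := by
  classical
  let f : Fin d → X →L[ℝ] ℝ := fun i => ∑ k : Fin D, c i k • lk k
  have hf : ∀ i u, f i u = ∑ k : Fin D, c i k * lk k u := by
    intro i u; simp [f]
  obtain ⟨B, hB⟩ := exists_nat_ge (1 + ∑ i, |f i v0| + ∑ i, ∑ k, |c i k|)
  have hs1 : 0 ≤ ∑ i, |f i v0| := Finset.sum_nonneg fun _ _ => abs_nonneg _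
  have hs2 : 0 ≤ ∑ i, ∑ k, |c i k| :=
    Finset.sum_nonneg fun _ _ => Finset.sum_nonneg fun _ _ => abs_nonneg _
  have hB1 : (1 : ℝ) ≤ B := by linarith
  have hBc : ∀ i k, |c i k| ≤ B := by
    intro i k
    have h1 : |c i k| ≤ ∑ k, |c i k| :=
      Finset.single_le_sum (f := fun k => |c i k|) (fun _ _ => abs_nonneg _) (Finset.mem_univ k)
    have h2 : ∑ k, |c i k| ≤ ∑ i, ∑ k, |c i k| :=
      Finset.single_le_sum (f := fun i => ∑ k, |c i k|)
        (fun _ _ => Finset.sum_nonneg fun _ _ => abs_nonneg _) (Finset.mem_univ i)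
    linarith
  have hBf : ∀ i, |f i v0| + 1 ≤ B := by
    intro i
    have h1 : |f i v0| ≤ ∑ i, |f i v0| :=
      Finset.single_le_sum (f := fun i => |f i v0|) (fun _ _ => abs_nonneg _) (Finset.mem_univ i)
    linarith
  have hd' : (1 : ℝ) ≤ d := by exact_mod_cast hd
  let p : ℕ := 2 * d * B
  let q : ℕ := d * (p * 2)
  refine ⟨q * D + q + q + 3 + n0 + D, by omega, fun M hM => ?_⟩
  have hM' : (1 : ℝ) ≤ M := by exact_mod_cast hM
  set n : ℕ := (q * D + q + q + 3 + n0 + D) * M with hn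
  have hnge : q * M * D + q * M + q * M + 3 ≤ n ∧ n0 ≤ n ∧ D ≤ n ∧ 1 ≤ n := by
    have e1 : n = q * M * D + q * M + q * M + 3 * M + n0 * M + D * M := by rw [hn]; ring
    have e2 : n0 ≤ n0 * M := Nat.le_mul_of_pos_right _ hM
    have e3 : D ≤ D * M := Nat.le_mul_of_pos_right _ hM
    refine ⟨by omega, by omega, by omega, by omega⟩
  set h : ℝ := (n : ℝ) ^ (-α) with hh
  have hn1 : (1 : ℝ) ≤ n := by exact_mod_cast hnge.2.2.2
  have hh0 : 0 ≤ h := Real.rpow_nonneg (by linarith) _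
  have hh1 : h ≤ 1 := Real.rpow_le_one_of_one_le_of_nonpos hn1 (by linarith)
  let t : (Fin d → Fin M) → Fin d → ℝ := fun j i => ((j i : ℕ) : ℝ) / (M * d)
  have ht0 : ∀ j i, 0 ≤ t j i := fun j i => by positivity
  have ht1 : ∀ j i, t j i ≤ 1 := by
    intro j i
    have : ((j i : ℕ) : ℝ) ≤ M := by exact_mod_cast (j i).2.le
    apply (div_le_one (by positivity)).mpr
    nlinarith
  let a : (Fin d → Fin M) → Fin d → X → ℝ := fun j i u => (f i u - f i v0 - t j i) / B
  let G : (Fin d → Fin M) → X → ℝ := fun j u =>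
    h * relu (1 - ((p * M : ℕ) : ℝ) * ∑ i, |a j i u|)
  have hGsig : ∀ j n', n ≤ n' → G j ∈ DONSigma lk n' ℓ := by
    intro j n' hn'
    have hcard : Fintype.card (Fin d × (Fin (p * M) × Bool)) = q * M := by
      simp [q]; ring
    let E : Fin (q * M) ≃ Fin d × (Fin (p * M) × Bool) := (Fintype.equivFinOfCardEq hcard).symm
    let sg : Bool → ℝ := fun s => if s then 1 else -1
    have hsg : ∀ s, |sg s| = 1 := by intro s; cases s <;> simp [sg]
    refine ⟨D, by omega, _, bumpNet_mem D (q * M) n' ℓ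
      (fun r k => sg (E r).2.2 * (c (E r).1 k / B))
      (fun r => sg (E r).2.2 * (-(f (E r).1 v0 + t j (E r).1) / B)) h ?_ ?_ ?_ (by omega)
      (hn0.trans (hmono (by omega))), ?_⟩
    · intro r k
      rw [abs_mul, hsg, one_mul, abs_div, abs_of_nonneg (by linarith : (0 : ℝ) ≤ B)]
      exact (div_le_one (by linarith)).mpr (hBc _ _)
    · intro r
      rw [abs_mul, hsg, one_mul, abs_div, abs_of_nonneg (by linarith : (0 : ℝ) ≤ B), abs_neg]
      apply (div_le_one (by linarith)).mpr
      refine (abs_add_le _ _).trans ?_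
      rw [abs_of_nonneg (ht0 j (E r).1)]
      linarith [hBf (E r).1, ht1 j (E r).1]
    · rw [abs_of_nonneg hh0]; exact hh1
    · intro u
      have key : ∀ r, (∑ k : Fin D, sg (E r).2.2 * (c (E r).1 k / B) * lk k u) +
          sg (E r).2.2 * (-(f (E r).1 v0 + t j (E r).1) / B) = sg (E r).2.2 * a j (E r).1 u := by
        intro r
        simp only [a]
        rw [hf _ u]
        have : ∑ k : Fin D, sg (E r).2.2 * (c (E r).1 k / B) * lk k u =
          sg (E r).2.2 * ((∑ k : Fin D, c (E r).1 k * lk k u) / B) := by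
          rw [Finset.sum_div, Finset.mul_sum]
          exact Finset.sum_congr rfl fun k _ => by ring
        rw [this]; ring
      simp only [G]
      congr 3
      simp only [key]
      rw [Equiv.sum_comp E (fun x => relu (sg x.2.2 * a j x.1 u)), Fintype.sum_prod_type,
        Finset.mul_sum]
      refine Finset.sum_congr rfl fun i _ => ?_
      rw [Fintype.sum_prod_type]
      simp [sg, relu_add_neg]
  have hacont : ∀ j i, Continuous (a j i) := by
    intro j i
    have := (f i).continuous
    simp only [a]
    fun_prop
  have hBp : (0 : ℝ) < B := by linarith
  refine ⟨G, ?_, ?_, ?_⟩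
  · intro j
    refine mem_ball lk n ℓ α hα hl hmono (G j) hnge.2.2.2 (hGsig j) ?_ ?_
    · refine continuous_const.mul (relu_cont.comp (continuous_const.sub (continuous_const.mul ?_)))
      exact continuous_finset_sum _ fun i _ => (hacont j i).abs
    · intro u
      have hr0 : 0 ≤ relu (1 - ((p * M : ℕ) : ℝ) * ∑ i, |a j i u|) := le_max_right _ _
      have hr1 : relu (1 - ((p * M : ℕ) : ℝ) * ∑ i, |a j i u|) ≤ 1 := by
        apply max_le _ zero_le_one
        have : 0 ≤ ((p * M : ℕ) : ℝ) * ∑ i, |a j i u| := by positivity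
        linarith
      rw [abs_of_nonneg (mul_nonneg hh0 hr0)]
      nlinarith
  · have hclose : ∀ u j, G j u ≠ 0 → ∀ i, |M * d * (f i u - f i v0) - (j i : ℕ)| < 1 / 2 := by
      intro u j hne i
      have hpos : ((p * M : ℕ) : ℝ) * ∑ i, |a j i u| < 1 := by
        by_contra hle
        push Not at hle
        apply hne
        simp only [G, relu]
        rw [max_eq_right (by linarith), mul_zero]
      have h1 : |a j i u| ≤ ∑ i, |a j i u| :=
        Finset.single_le_sum (f := fun i => |a j i u|) (fun _ _ => abs_nonneg _) (Finset.mem_univ i)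
      have h2 : ((p * M : ℕ) : ℝ) * |a j i u| < 1 :=
        lt_of_le_of_lt (mul_le_mul_of_nonneg_left h1 (by positivity)) hpos
      have h3 : M * d * (f i u - f i v0) - (j i : ℕ) = (M * d * B) * a j i u := by
        simp only [a, t]
        field_simp
      rw [h3, abs_mul, abs_of_nonneg (by positivity)]
      have h4 : ((p * M : ℕ) : ℝ) = 2 * (M * d * B) := by simp only [p]; push_cast; ring
      rw [h4] at h2
      linarith
    intro u j j' hj hj'
    funext i
    have h1 := abs_lt.mp (hclose u j hj i)
    have h2 := abs_lt.mp (hclose u j' hj' i)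
    apply Fin.ext
    have e1 : ((j i : ℕ) : ℝ) < (j' i : ℕ) + 1 := by linarith
    have e2 : ((j' i : ℕ) : ℝ) < (j i : ℕ) + 1 := by linarith
    have e1' : (j i : ℕ) < (j' i : ℕ) + 1 := by exact_mod_cast e1
    have e2' : (j' i : ℕ) < (j i : ℕ) + 1 := by exact_mod_cast e2
    omega
  · intro j
    refine ⟨v0 + ∑ i, t j i • w i, ?_, ?_⟩
    · have hmem : ∀ i : Fin d, v0 + (((j i : ℕ) : ℝ) / M) • w i ∈ K := by
        intro i
        have : ((j i : ℕ) : ℝ) ≤ M := by exact_mod_cast (j i).2.le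
        exact hconv.add_smul_mem hv0 (hw i) ⟨by positivity, (div_le_one (by linarith)).mpr this⟩
      have := hconv.sum_mem (t := Finset.univ) (w := fun _ : Fin d => (1 / d : ℝ))
        (fun _ _ => by positivity) (by simp; field_simp) (fun i _ => hmem i)
      convert this using 1
      simp only [smul_add, Finset.sum_add_distrib, smul_smul]
      congr 1
      · rw [← Finset.sum_smul]
        have : (∑ _i : Fin d, (1 / d : ℝ)) = 1 := by simp; field_simp
        rw [this, one_smul]
      · refine Finset.sum_congr rfl fun i _ => ?_
        congr 1
        simp only [t]
        field_simp
    · have ha0 : ∀ i, a j i (v0 + ∑ i, t j i • w i) = 0 := by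
        intro i
        have : f i (∑ i, t j i • w i) = t j i := by
          rw [map_sum]
          have hfw : ∀ i', f i (w i') = if i = i' then 1 else 0 := fun i' => (hf i _).trans (hc i i')
          simp only [map_smul, smul_eq_mul, hfw]
          simp
        simp only [a]
        rw [map_add, this]
        simp
      simp only [G, ha0]
      simp [relu]

/-- **Theorem (DeepONet; uniform theory-to-practice gap).** Let `ℓ` be non-decreasing
with `ℓ* ≥ 4`, `X` a separable Banach space, `{ℓ_k} ⊆ X^*` with dense span, and
`K ⊆ X` a compact convex set not contained in any finite-dimensional subspace. Then for
every `α > 0`, `β_*(𝐔^{α,∞}_{ℓ,DON}, C(K)) = 0`. -/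
theorem don_uniform_theory_to_practice_gap
    {X : Type*} [NormedAddCommGroup X] [NormedSpace ℝ X] [CompleteSpace X]
    [SecondCountableTopology X] [MeasurableSpace X] [BorelSpace X]
    (lk : ℕ → X →L[ℝ] ℝ)
    (hdense : Dense (Submodule.span ℝ (Set.range lk) : Set (X →L[ℝ] ℝ)))
    (ℓ : ℕ → ℕ∞) (hmono : Monotone ℓ) (hsup : 4 ≤ ⨆ n, ℓ n)
    (K : Set X) (hKc : IsCompact K) (hconv : Convex ℝ K)
    (hfd : ¬ ∃ S : Submodule ℝ X, FiniteDimensional ℝ S ∧ K ⊆ (S : Set X))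
    (α : ℝ) (hα : 0 < α) :
    betaStarSup (DONUnitBall lk α ℓ) K = 0 := by
  have hS : ∀ S : Set ℝ, (∀ x ∈ S, x = 0) → sSup S = 0 := by
    intro S hS
    rcases Set.subset_singleton_iff_eq.mp (fun x hx => hS x hx : S ⊆ {0}) with h | h
    · rw [h, Real.sSup_empty]
    · rw [h, csSup_singleton]
  by_cases hl : 1 ≤ ℓ 1
  swap
  · -- the class is empty
    have hl0 : ℓ 1 = 0 := by
      rw [← ENat.lt_one_iff_eq_zero]; exact not_le.mp hl
    have hU : DONUnitBall lk α ℓ = ∅ := by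
      rw [Set.eq_empty_iff_forall_notMem]
      rintro G ⟨-, -, hG⟩
      have hemp : DONSigma lk 1 ℓ = ∅ := by
        rw [Set.eq_empty_iff_forall_notMem]
        rintro Ψ ⟨d₀, -, g, ⟨ψ, -, -, h1, -, h2, -⟩, -⟩
        rw [hl0] at h2
        have : (ψ.L : ℕ∞) = 0 := nonpos_iff_eq_zero.mp h2
        have : ψ.L = 0 := by exact_mod_cast this
        omega
      have := hG 1 le_rfl
      rw [hemp] at this
      simp at this
    have hzero : ∀ N, ranErrorSup (DONUnitBall lk α ℓ) K N = 0 := by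
      intro N
      rw [hU]
      apply le_antisymm _ bot_le
      unfold ranErrorSup
      refine iInf_le_of_le Unit <| iInf_le_of_le inferInstance <|
        iInf_le_of_le (Measure.dirac ()) <| iInf_le_of_le inferInstance <|
        iInf_le_of_le (fun _ _ _ => 0) <| iInf_le_of_le (fun _ => 0) <|
        iInf_le_of_le measurable_const <| iInf_le_of_le (by simp) <|
        iInf_le_of_le (fun _ => ⟨fun i => i.elim0, fun i => i.elim0, fun _ _ => 0, by simp⟩) <|
        iInf_le_of_le (by simp) (by simp)
    unfold betaStarSup
    apply Real.sSup_of_not_bddAbove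
    rintro ⟨b, hb⟩
    have : |b| + 1 ≤ b := hb ⟨by positivity, 1, one_pos, fun N _ => by rw [hzero]; exact bot_le⟩
    linarith [le_abs_self b]
  obtain ⟨n0, hn0⟩ : ∃ n0, 3 ≤ ℓ n0 := by
    by_contra hcon
    push Not at hcon
    have : (⨆ n, ℓ n) ≤ 3 := iSup_le fun n => (hcon n).le
    have := hsup.trans this
    exact absurd this (by decide)
  apply hS
  rintro β ⟨hβ0, C, hC, hbd⟩
  by_contra hβ
  have hβp : 0 < β := lt_of_le_of_ne hβ0 (Ne.symm hβ)
  obtain ⟨d, hd⟩ := exists_nat_gt (α / β)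
  have hd0 : (0 : ℝ) < d := lt_trans (by positivity) hd
  have hd1 : 1 ≤ d := by exact_mod_cast hd0
  obtain ⟨v0, hv0, w, hw, D, c, hc⟩ := geom lk hdense K hfd d
  obtain ⟨R, hR, hbump⟩ := bumps lk ℓ hmono hl n0 hn0 K hconv α hα d hd1 v0 hv0 w hw D c hc
  have hRpos : (0 : ℝ) < R := by exact_mod_cast hR
  have h0 : (fun _ => 0 : X → ℝ) ∈ DONUnitBall lk α ℓ :=
    mem_ball lk 1 ℓ α hα hl hmono _ le_rfl
      (fun n' hn' => zero_mem_sigma lk n' ℓ (hl.trans (hmono hn'))) continuous_const (by simp)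
  have hfinal : ∀ M : ℕ, 1 ≤ M → (M : ℝ) ^ (d * β - α) ≤ 4 * C * (R * 2 : ℝ) ^ α := by
    intro M hM
    have hMp : (0 : ℝ) < M := by exact_mod_cast hM
    obtain ⟨G, hG, hdisj, hpk⟩ := hbump (2 * M) (by omega)
    have hN1 : 1 ≤ M ^ d := Nat.one_le_pow _ _ hM
    have hlow := lower_bound (DONUnitBall lk α ℓ) K (M ^ d) G _ (by positivity) h0 hG hdisj hpk
      (by
        simp only [Fintype.card_pi, Fintype.card_fin, Finset.prod_const, Finset.card_univ]
        rw [mul_pow]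
        exact Nat.mul_le_mul_right _ (Nat.le_self_pow (by omega) 2)) hN1
    have hle := hlow.trans (hbd _ hN1)
    rw [ENNReal.ofReal_le_ofReal_iff (by positivity)] at hle
    have e1 : ((R * (2 * M) : ℕ) : ℝ) ^ (-α) = ((R * 2 : ℝ) ^ α)⁻¹ * (M : ℝ) ^ (-α) := by
      push_cast
      rw [← mul_assoc, Real.mul_rpow (by positivity) hMp.le, Real.rpow_neg (by positivity)]
    have e2 : ((M ^ d : ℕ) : ℝ) ^ (-β) = (M : ℝ) ^ (-(d * β)) := by
      push_cast
      rw [← Real.rpow_natCast, ← Real.rpow_mul hMp.le]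
      congr 1; ring
    rw [e1, e2] at hle
    have hx : (M : ℝ) ^ (d * β - α) = (M : ℝ) ^ (d * β) * (M : ℝ) ^ (-α) := by
      rw [← Real.rpow_add hMp]; congr 1
    have hy : (M : ℝ) ^ (d * β) * (M : ℝ) ^ (-(d * β)) = 1 := by
      rw [← Real.rpow_add hMp]; simp
    have hA : (0 : ℝ) < (R * 2 : ℝ) ^ α := by positivity
    have hMb : (0 : ℝ) < (M : ℝ) ^ (d * β) := by positivity
    rw [hx]
    have hk := mul_le_mul_of_nonneg_left hle
      (by positivity : 0 ≤ 4 * (R * 2 : ℝ) ^ α * (M : ℝ) ^ (d * β))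
    calc (M : ℝ) ^ (d * β) * (M : ℝ) ^ (-α)
        = 4 * (R * 2 : ℝ) ^ α * (M : ℝ) ^ (d * β) * (((R * 2 : ℝ) ^ α)⁻¹ * (M : ℝ) ^ (-α) / 4) := by
          field_simp
      _ ≤ _ := hk
      _ = 4 * C * (R * 2 : ℝ) ^ α * ((M : ℝ) ^ (d * β) * (M : ℝ) ^ (-(d * β))) := by ring
      _ = _ := by rw [hy, mul_one]
  have hexp : 0 < d * β - α := by
    have := (div_lt_iff₀ hβp).mp hd
    linarith
  have htend := (tendsto_rpow_atTop hexp).comp (tendsto_natCast_atTop_atTop (R := ℝ))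
  obtain ⟨M, hM1, hM2⟩ := ((htend.eventually_gt_atTop (4 * C * (R * 2 : ℝ) ^ α)).and
    (Filter.eventually_ge_atTop 1)).exists
  exact absurd (hfinal M hM2) (not_le.mpr hM1)

end
end

section
/- Let D ⊂ ℝ^{d_D} be a bounded Lipschitz domain, let X(D) ⊂ L^∞(D) be a Banach space of real-valued functions on D, let d ∈ ℕ, and let μ be a Borel probability measure on X(D) satisfying Assumption (d) whose biorthogonal elements e_j* are represented by functions in L^1(D) via e_j*(u) = ∫_D u(x)e_j*(x)dx. Then there exist a shallow ReLU neural network R: ℝ × ℝ^{d_D} → ℝ^d and a constant c > 0 (depending on d) such that the encoder E: X(D) → ℝ^d defined by E(u) = ⨍_D R(u(x),x)dx satisfies E_#μ ≥ c·Unif([0,1]^d). -/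
open MeasureTheory ENNReal

noncomputable section

/-- The unit cube `[0,1]^d`. -/
def unitCube (d : ℕ) : Set (Fin d → ℝ) := Set.Icc 0 1

/-- The uniform (Lebesgue) measure on the unit cube `[0,1]^d`. -/
def cubeVol (d : ℕ) : Measure (Fin d → ℝ) := volume.restrict (unitCube d)

/-- The product measure on `ℝ^d` with density `∏_j ρ_j(z_j)` w.r.t. Lebesgue measure. -/
def productLaw {d : ℕ} (ρ : Fin d → ℝ → ℝ) : Measure (Fin d → ℝ) :=
  volume.withDensity fun z => ENNReal.ofReal (∏ j, ρ j (z j))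

/-- **Assumption (d).** The measure `μ` is the law of `u = ξ + ∑_{j=1}^d y_j e_j`,
where `e_1, …, e_d` are linearly independent with biorthogonal functionals
`e_1^*, …, e_d^*`, the coordinates `(y_1, …, y_d)` have a product law with densities
`ρ_j` each bounded below by a positive constant (a.e.) on some non-trivial interval,
and `ξ` is independent of `y` with `e_j^*(ξ) = 0` almost surely. -/
def AssumptionD {X : Type*} [NormedAddCommGroup X] [NormedSpace ℝ X] [MeasurableSpace X]
    (μ : Measure X) (d : ℕ) (e : Fin d → X) (estar : Fin d → X → ℝ) : Prop :=
  LinearIndependent ℝ e ∧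
  (∀ j k, estar j (e k) = if j = k then 1 else 0) ∧
  ∃ ρ : Fin d → ℝ → ℝ,
    (∀ j, (∀ z, 0 ≤ ρ j z) ∧ Integrable (ρ j) ∧ ∫ z, ρ j z = 1) ∧
    (∀ j, ∃ a b : ℝ, a < b ∧ ∃ ε : ℝ, 0 < ε ∧
      ∀ᵐ z ∂(volume.restrict (Set.Ioo a b)), ε ≤ ρ j z) ∧
    ∃ (Ξ : Type) (_ : MeasurableSpace Ξ) (P : Measure Ξ) (_ : IsProbabilityMeasure P)
      (y : Ξ → Fin d → ℝ) (ξv : Ξ → X),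
      Measurable y ∧ Measurable ξv ∧
      ProbabilityTheory.IndepFun y ξv P ∧
      Measure.map y P = productLaw ρ ∧
      (∀ j, ∀ᵐ ω ∂P, estar j (ξv ω) = 0) ∧
      μ = Measure.map (fun ω => ξv ω + ∑ j, y ω j • e j) P

/-- Half-space used for the kernels. -/
def hsp {n : ℕ} (p : (Fin n → ℝ) × ℝ) : Set (Fin n → ℝ) := {x | 0 < (∑ k, p.1 k * x k) + p.2}

lemma hsp_meas {n : ℕ} (p : (Fin n → ℝ) × ℝ) : MeasurableSet (hsp p) := by
  unfold hsp
  exact measurableSet_lt measurable_const (by fun_prop)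

lemma vanish {n : ℕ} (m : Measure (Fin n → ℝ)) (w : (Fin n → ℝ) → ℝ) (hw : Integrable w m)
    (h : ∀ p, ∫ x in hsp p, w x ∂m = 0) : w =ᵐ[m] 0 := by
  have key : ∀ A, ∫ x in A, w x ∂m = 0 →
      ∫⁻ x in A, ENNReal.ofReal (w x) ∂m = ∫⁻ x in A, ENNReal.ofReal (-w x) ∂m := by
    intro A hA
    have hi : Integrable w (m.restrict A) := hw.restrict
    rw [integral_eq_lintegral_pos_part_sub_lintegral_neg_part hi] at hA
    have h1 : ∫⁻ x in A, ENNReal.ofReal (w x) ∂m ≠ ⊤ := hi.lintegral_lt_top.ne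
    have h2 : ∫⁻ x in A, ENNReal.ofReal (-w x) ∂m ≠ ⊤ := hi.neg.lintegral_lt_top.ne
    exact (ENNReal.toReal_eq_toReal_iff' h1 h2).1 (by linarith)
  have huniv : ∫ x, w x ∂m = 0 := by
    have := h (0, 1)
    have h2 : hsp ((0, 1) : (Fin n → ℝ) × ℝ) = Set.univ := by ext x; simp [hsp]
    rwa [h2, setIntegral_univ] at this
  have hneg : ∀ A, MeasurableSet A → ∫ x in A, w x ∂m = 0 → ∫ x in Aᶜ, w x ∂m = 0 := by
    intro A hA h0
    have := integral_add_compl hA hw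
    linarith
  set mp := m.withDensity (fun x => ENNReal.ofReal (w x)) with hmp
  set mn := m.withDensity (fun x => ENNReal.ofReal (-w x)) with hmn
  have : IsFiniteMeasure mp := isFiniteMeasure_withDensity_ofReal hw.2
  have : IsFiniteMeasure mn := isFiniteMeasure_withDensity_ofReal hw.neg.2
  have heq : mp = mn := by
    apply Measure.ext_of_charFunDual
    ext L
    rw [charFunDual_eq_charFun_map_one, charFunDual_eq_charFun_map_one]
    congr 1
    apply Measure.ext_of_Iic
    intro a
    rw [Measure.map_apply (by fun_prop) measurableSet_Iic,
      Measure.map_apply (by fun_prop) measurableSet_Iic]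
    have hms : MeasurableSet (L ⁻¹' Set.Iic a) := measurableSet_Iic.preimage (by fun_prop)
    rw [hmp, hmn, withDensity_apply _ hms, withDensity_apply _ hms]
    apply key
    have hset : L ⁻¹' Set.Iic a = (hsp ((fun k => L (Pi.single k 1)), -a))ᶜ := by
      ext x
      have : L x = ∑ k, L (Pi.single k 1) * x k := by
        conv_lhs => rw [pi_eq_sum_univ' x]
        simp [map_sum, mul_comm]
      simp [hsp, this]
    rw [hset]
    exact hneg _ (hsp_meas _) (h _)
  apply hw.ae_eq_zero_of_forall_setIntegral_eq_zero
  intro A hA _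
  rw [integral_eq_lintegral_pos_part_sub_lintegral_neg_part hw.restrict]
  have : mp A = mn A := by rw [heq]
  rw [hmp, hmn, withDensity_apply _ hA, withDensity_apply _ hA] at this
  rw [this, sub_self]

lemma exists_halfspaces {n d : ℕ} (m : Measure (Fin n → ℝ)) (w : Fin d → (Fin n → ℝ) → ℝ)
    (hw : ∀ k, Integrable (w k) m)
    (hind : ∀ c : Fin d → ℝ, (fun x => ∑ k, c k * w k x) =ᵐ[m] 0 → c = 0) :
    ∃ (N : ℕ) (p : Fin N → (Fin n → ℝ) × ℝ) (a : Fin d → Fin N → ℝ),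
      (∀ i, p i ≠ 0) ∧
      ∀ j k, ∑ i, a j i * ∫ x in hsp (p i), w k x ∂m = if j = k then 1 else 0 := by
  classical
  let V : {p : (Fin n → ℝ) × ℝ // p ≠ 0} → Fin d → ℝ := fun p k => ∫ x in hsp p.1, w k x ∂m
  have hspan : Submodule.span ℝ (Set.range V) = ⊤ := by
    by_contra hne
    obtain ⟨f, hf0, hf⟩ := Submodule.exists_le_ker_of_lt_top _ (lt_top_iff_ne_top.2 hne)
    apply hf0
    have hfx : ∀ x, f x = ∑ k, f (Pi.single k 1) * x k := by
      intro x
      conv_lhs => rw [pi_eq_sum_univ' x]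
      simp [map_sum, mul_comm]
    have hc := hind (fun k => f (Pi.single k 1)) (by
      apply vanish m _ (integrable_finsetSum _ fun k _ => (hw k).const_mul _)
      intro p
      by_cases hp : p = 0
      · have : hsp p = ∅ := by ext x; simp [hsp, hp]
        simp [this]
      · rw [integral_finsetSum _ (fun k _ => ((hw k).restrict).const_mul _)]
        have := hf (Submodule.subset_span ⟨⟨p, hp⟩, rfl⟩)
        rw [LinearMap.mem_ker, hfx] at this
        simpa [integral_const_mul, V] using this)
    ext k
    simpa using congrFun hc k
  have hmem : ∀ j : Fin d, ∃ c : {p : (Fin n → ℝ) × ℝ // p ≠ 0} →₀ ℝ,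
      (c.sum fun i r => r • V i) = Pi.single j 1 := fun j =>
    (Finsupp.mem_span_range_iff_exists_finsupp).1 (hspan ▸ Submodule.mem_top)
  choose c hc using hmem
  let S := Finset.univ.biUnion fun j => (c j).support
  refine ⟨S.card, fun i => (S.equivFin.symm i).1.1, fun j i => c j (S.equivFin.symm i).1,
    fun i => (S.equivFin.symm i).1.2, ?_⟩
  intro j k
  have h1 := congrFun (hc j) k
  rw [Finsupp.sum_of_support_subset (s := S) _ (Finset.subset_biUnion_of_mem (fun j => (c j).support) (Finset.mem_univ j)) _ (by simp)] at h1
  rw [Finset.sum_apply] at h1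
  rw [S.equivFin.symm.sum_comp (fun q : S => c j q.1 * ∫ x in hsp q.1.1, w k x ∂m)]
  rw [← Finset.sum_coe_sort] at h1
  simp only [Pi.smul_apply, smul_eq_mul, Pi.single_apply, V] at h1
  rw [h1]
  simp [eq_comm]

lemma relu_lip (s t : ℝ) : |relu s - relu t| ≤ |s - t| := by
  unfold relu
  simpa using abs_max_sub_max_le_abs s t 0

open Classical in
lemma relu_approx (M δ t η η' : ℝ) (hδ : 0 < δ) (h : |η| ≤ M) (h' : |η'| ≤ M) :
    |relu (δ * η + t) - relu (δ * η' + t) - (if 0 < t then δ * (η - η') else 0)|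
      ≤ if |t| ≤ δ * M then δ * |η - η'| else 0 := by
  rw [abs_le] at h h'
  have a1 : δ * η ≤ δ * M := by gcongr; exact h.2
  have a2 : δ * η' ≤ δ * M := by gcongr; exact h'.2
  have a3 : δ * (-M) ≤ δ * η := by gcongr; exact h.1
  have a4 : δ * (-M) ≤ δ * η' := by gcongr; exact h'.1
  have a5 : δ * |η - η'| = |δ * η - δ * η'| := by
    rw [← mul_sub, abs_mul, abs_of_pos hδ]
  rw [a5, mul_sub]
  generalize δ * η = p at *
  generalize δ * η' = q at *
  rw [mul_neg] at a3 a4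
  generalize δ * M = m at *
  unfold relu
  by_cases ht : |t| ≤ m
  · rw [if_pos ht]
    split_ifs <;> rcases max_cases (p + t) 0 with ⟨h1, _⟩ | ⟨h1, _⟩ <;>
      rcases max_cases (q + t) 0 with ⟨h2, _⟩ | ⟨h2, _⟩ <;> rw [h1, h2] <;>
      rcases abs_cases (p - q) with ⟨h3, _⟩ | ⟨h3, _⟩ <;> rw [h3, abs_le] <;>
      constructor <;> linarith
  · rw [if_neg ht]
    rw [not_le, lt_abs] at ht
    rcases ht with ht | ht
    · rw [if_pos (by linarith), max_eq_left (by linarith), max_eq_left (by linarith)]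
      rw [show p + t - (q + t) - (p - q) = 0 by ring]; simp
    · rw [if_neg (by linarith), max_eq_right (by linarith), max_eq_right (by linarith)]
      simp

/-- Strip around a hyperplane. -/
def strip {n : ℕ} (p : (Fin n → ℝ) × ℝ) (s : ℝ) : Set (Fin n → ℝ) :=
  {x | |(∑ k, p.1 k * x k) + p.2| ≤ s}

lemma strip_meas {n : ℕ} (p : (Fin n → ℝ) × ℝ) (s : ℝ) : MeasurableSet (strip p s) := by
  unfold strip
  exact measurableSet_le (by fun_prop) measurable_const

lemma strip_zero {n : ℕ} (p : (Fin n → ℝ) × ℝ) (hp : p ≠ 0) : volume (strip p 0) = 0 := by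
  by_cases h1 : p.1 = 0
  · have h2 : p.2 ≠ 0 := fun h => hp (Prod.ext h1 h)
    have : strip p 0 = ∅ := by ext x; simp [strip, h1, h2]
    simp [this]
  · obtain ⟨k, hk⟩ := Function.ne_iff.1 h1
    rw [Pi.zero_apply] at hk
    let L : (Fin n → ℝ) →ₗ[ℝ] ℝ := ∑ k, p.1 k • LinearMap.proj k
    have hL : ∀ x, L x = ∑ k, p.1 k * x k := by intro x; simp [L]
    by_cases hne : (strip p 0).Nonempty
    · obtain ⟨x0, hx0⟩ := hne
      have hx0' : L x0 + p.2 = 0 := by rw [hL]; simpa [strip] using hx0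
      have hset : strip p 0 = (fun x => x + -x0) ⁻¹' (LinearMap.ker L : Set (Fin n → ℝ)) := by
        ext x
        have : x ∈ strip p 0 ↔ L x + p.2 = 0 := by rw [hL]; simp [strip]
        rw [this]
        simp only [Set.mem_preimage, SetLike.mem_coe, LinearMap.mem_ker, map_add, map_neg]
        constructor <;> intro h <;> linarith
      rw [hset, measure_preimage_add_right]
      apply Measure.addHaar_submodule
      intro htop
      have : Pi.single k (1:ℝ) ∈ LinearMap.ker L := htop ▸ Submodule.mem_top
      rw [LinearMap.mem_ker, hL] at this
      simp [Pi.single_apply] at this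
      exact hk this
    · rw [Set.not_nonempty_iff_eq_empty.1 hne]; simp

lemma strip_tendsto {n : ℕ} (p : (Fin n → ℝ) × ℝ) (hp : p ≠ 0) (D : Set (Fin n → ℝ))
    (hD : volume D ≠ ⊤) (M : ℝ) (hM : 0 ≤ M) :
    Filter.Tendsto (fun N : ℕ => (volume.restrict D).real (strip p ((1 / ((N : ℝ) + 1)) * M)))
      Filter.atTop (nhds 0) := by
  have : IsFiniteMeasure (volume.restrict D) := ⟨by simpa using hD.lt_top⟩
  have h := tendsto_measure_iInter_atTop (μ := volume.restrict D)
    (s := fun N : ℕ => strip p ((1 / ((N : ℝ) + 1)) * M))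
    (fun i => (strip_meas _ _).nullMeasurableSet)
    (by
      intro i j hij x hx
      simp only [strip, Set.mem_ofPred_eq] at hx ⊢
      refine hx.trans ?_
      gcongr) ⟨0, measure_ne_top _ _⟩
  have hI : (⋂ N : ℕ, strip p ((1 / ((N : ℝ) + 1)) * M)) = strip p 0 := by
    ext x
    simp only [Set.mem_iInter]
    constructor
    · intro hx
      have ht : Filter.Tendsto (fun N : ℕ => (1 / ((N : ℝ) + 1)) * M) Filter.atTop (nhds (0 * M)) :=
        tendsto_one_div_add_atTop_nhds_zero_nat.mul_const M
      rw [zero_mul] at ht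
      exact ge_of_tendsto' ht hx
    · intro hx N
      have h0 : |(∑ k, p.1 k * x k) + p.2| ≤ 0 := hx
      have h1 : 0 ≤ (1 / ((N : ℝ) + 1)) * M := by positivity
      exact h0.trans h1
  rw [hI, Measure.absolutelyContinuous_of_le Measure.restrict_le_self (strip_zero p hp)] at h
  exact (ENNReal.tendsto_toReal ENNReal.zero_ne_top).comp h

/-- One unit. -/
def unitT {n : ℕ} (m : Measure (Fin n → ℝ)) (δ : ℝ) (p : (Fin n → ℝ) × ℝ)
    (f : (Fin n → ℝ) → ℝ) : ℝ :=
  ∫ x, relu (δ * f x + ((∑ k, p.1 k * x k) + p.2)) / δ ∂m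

lemma unit_int {n : ℕ} (m : Measure (Fin n → ℝ)) [IsFiniteMeasure m]
    (hx : ∀ k, Integrable (fun x : Fin n → ℝ => x k) m) (δ : ℝ)
    (p : (Fin n → ℝ) × ℝ) (f : (Fin n → ℝ) → ℝ) (hf : Integrable f m) :
    Integrable (fun x => relu (δ * f x + ((∑ k, p.1 k * x k) + p.2))) m := by
  unfold relu
  exact ((hf.const_mul δ).add ((integrable_finsetSum _ fun k _ => (hx k).const_mul _).add
    (integrable_const _))).pos_part

lemma unit_lip {n : ℕ} (m : Measure (Fin n → ℝ)) [IsFiniteMeasure m]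
    (hx : ∀ k, Integrable (fun x : Fin n → ℝ => x k) m) (δ : ℝ) (hδ : 0 < δ)
    (p : (Fin n → ℝ) × ℝ) (f g : (Fin n → ℝ) → ℝ) (hf : Integrable f m) (hg : Integrable g m)
    (s : ℝ) (hs : ∀ᵐ x ∂m, |f x - g x| ≤ s) :
    |unitT m δ p f - unitT m δ p g| ≤ s * m.real Set.univ := by
  unfold unitT
  rw [← integral_sub ((unit_int m hx δ p f hf).div_const _) ((unit_int m hx δ p g hg).div_const _),
    ← Real.norm_eq_abs]
  apply norm_integral_le_of_norm_le_const
  filter_upwards [hs] with x h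
  rw [Real.norm_eq_abs, ← sub_div, abs_div, abs_of_pos hδ, div_le_iff₀ hδ]
  refine (relu_lip _ _).trans ?_
  rw [add_sub_add_right_eq_sub, ← mul_sub, abs_mul, abs_of_pos hδ, mul_comm]
  gcongr

lemma unit_approx {n : ℕ} (m : Measure (Fin n → ℝ)) [IsFiniteMeasure m]
    (hx : ∀ k, Integrable (fun x : Fin n → ℝ => x k) m) (δ : ℝ) (hδ : 0 < δ)
    (p : (Fin n → ℝ) × ℝ) (f g : (Fin n → ℝ) → ℝ) (hf : Integrable f m) (hg : Integrable g m)
    (s M : ℝ) (hs : ∀ᵐ x ∂m, |f x - g x| ≤ s) (hfM : ∀ᵐ x ∂m, |f x| ≤ M)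
    (hgM : ∀ᵐ x ∂m, |g x| ≤ M) :
    |unitT m δ p f - unitT m δ p g - ∫ x in hsp p, (f x - g x) ∂m| ≤
      m.real (strip p (δ * M)) * s := by
  classical
  unfold unitT
  have i1 := (unit_int m hx δ p f hf).div_const δ
  have i2 := (unit_int m hx δ p g hg).div_const δ
  have i3 : Integrable (Set.indicator (hsp p) fun x => f x - g x) m :=
    (hf.sub hg).indicator (hsp_meas p)
  have i12 : Integrable (fun x => relu (δ * f x + ((∑ k, p.1 k * x k) + p.2)) / δ
      - relu (δ * g x + ((∑ k, p.1 k * x k) + p.2)) / δ) m := i1.sub i2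
  rw [← integral_indicator (hsp_meas p), ← integral_sub i1 i2, ← integral_sub i12 i3,
    ← Real.norm_eq_abs]
  have hR : m.real (strip p (δ * M)) * s = ∫ x, Set.indicator (strip p (δ * M)) (fun _ => s) x ∂m := by
    rw [integral_indicator (strip_meas _ _)]; simp
  rw [hR]
  apply norm_integral_le_of_norm_le ((integrable_const s).indicator (strip_meas _ _))
  filter_upwards [hs, hfM, hgM] with x h1 h2 h3
  have := relu_approx M δ ((∑ k, p.1 k * x k) + p.2) (f x) (g x) hδ h2 h3
  have d1 : (hsp p).indicator (fun x => f x - g x) x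
      = if 0 < (∑ k, p.1 k * x k) + p.2 then f x - g x else 0 := by
    by_cases hq : x ∈ hsp p
    · have hq' : 0 < (∑ k, p.1 k * x k) + p.2 := hq
      rw [Set.indicator_of_mem hq, if_pos hq']
    · have hq' : ¬ 0 < (∑ k, p.1 k * x k) + p.2 := hq
      rw [Set.indicator_of_notMem hq, if_neg hq']
  have d2 : (strip p (δ * M)).indicator (fun _ => s) x
      = if |(∑ k, p.1 k * x k) + p.2| ≤ δ * M then s else 0 := by
    by_cases hq : x ∈ strip p (δ * M)
    · have hq' : |(∑ k, p.1 k * x k) + p.2| ≤ δ * M := hq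
      rw [Set.indicator_of_mem hq, if_pos hq']
    · have hq' : ¬ |(∑ k, p.1 k * x k) + p.2| ≤ δ * M := hq
      rw [Set.indicator_of_notMem hq, if_neg hq']
  rw [d1, d2, Real.norm_eq_abs]
  have e1 : relu (δ * f x + ((∑ k, p.1 k * x k) + p.2)) / δ
      - relu (δ * g x + ((∑ k, p.1 k * x k) + p.2)) / δ
      - (if 0 < (∑ k, p.1 k * x k) + p.2 then f x - g x else 0)
      = (relu (δ * f x + ((∑ k, p.1 k * x k) + p.2))
      - relu (δ * g x + ((∑ k, p.1 k * x k) + p.2))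
      - (if 0 < (∑ k, p.1 k * x k) + p.2 then δ * (f x - g x) else 0)) / δ := by
    split_ifs <;> field_simp <;> ring
  rw [e1, abs_div, abs_of_pos hδ, div_le_iff₀ hδ]
  refine this.trans ?_
  split_ifs
  · rw [mul_comm]; gcongr
  · simp

lemma push_bound {X : Type*} [MeasurableSpace X] {d : ℕ} (ν : Measure (Fin d → ℝ))
    [IsFiniteMeasure ν] (κ : Measure X) [IsFiniteMeasure κ]
    (F : (Fin d → ℝ) × X → Fin d → ℝ) (hF : Measurable F) (U : Set X) (hU : MeasurableSet U)
    (Q : Set (Fin d → ℝ)) (ε : ℝ≥0∞)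
    (hε : ∀ A, MeasurableSet A → ε * volume (A ∩ Q) ≤ ν A) (K : NNReal)
    (hLip : ∀ ξ ∈ U, LipschitzOnWith K (fun y => F (y, ξ)) Q)
    (hsurj : ∀ ξ ∈ U, unitCube d ⊆ (fun y => F (y, ξ)) '' Q)
    (B : Set (Fin d → ℝ)) (hB : MeasurableSet B) :
    (ε * volume (B ∩ unitCube d)) * κ U ≤ (K : ℝ≥0∞) ^ d * Measure.map F (ν.prod κ) B := by
  rw [Measure.map_apply hF hB, Measure.prod_apply_symm (hF hB),
    ← lintegral_const_mul _ (measurable_measure_prodMk_right (hF hB))]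
  have hstep : ∀ ξ ∈ U, ε * volume (B ∩ unitCube d) ≤
      (K : ℝ≥0∞) ^ d * ν ((fun x => (x, ξ)) ⁻¹' (F ⁻¹' B)) := by
    intro ξ hξ
    set A := (fun x => (x, ξ)) ⁻¹' (F ⁻¹' B) with hA
    have hAm : MeasurableSet A := (hF hB).preimage (by fun_prop)
    have hsub : B ∩ unitCube d ⊆ (fun y => F (y, ξ)) '' (A ∩ Q) := by
      rintro z ⟨hz1, hz2⟩
      obtain ⟨y, hy, rfl⟩ := hsurj ξ hξ hz2
      exact ⟨y, ⟨hz1, hy⟩, rfl⟩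
    have h2 := ((hLip ξ hξ).mono (Set.inter_subset_right (s := A))).hausdorffMeasure_image_le
      (d := (d : ℝ)) (by positivity)
    have h3 : (Measure.hausdorffMeasure (d : ℝ) : Measure (Fin d → ℝ)) = volume := by
      have := hausdorffMeasure_pi_real (ι := Fin d)
      rwa [Fintype.card_fin] at this
    rw [h3, ENNReal.rpow_natCast] at h2
    calc ε * volume (B ∩ unitCube d) ≤ ε * ((K : ℝ≥0∞) ^ d * volume (A ∩ Q)) := by
          gcongr; exact (measure_mono hsub).trans h2
      _ = (K : ℝ≥0∞) ^ d * (ε * volume (A ∩ Q)) := by ring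
      _ ≤ _ := by gcongr; exact hε A hAm
  calc (ε * volume (B ∩ unitCube d)) * κ U
      = ∫⁻ _ in U, (ε * volume (B ∩ unitCube d)) ∂κ := by simp
    _ ≤ ∫⁻ ξ in U, (K : ℝ≥0∞) ^ d * ν ((fun x => (x, ξ)) ⁻¹' (F ⁻¹' B)) ∂κ :=
        setLIntegral_mono' hU hstep
    _ ≤ _ := setLIntegral_le_lintegral _ _

lemma law_bound {d : ℕ} (ρ : Fin d → ℝ → ℝ) (a b ε : Fin d → ℝ) (hε : ∀ j, 0 < ε j)
    (h : ∀ j, ∀ᵐ z ∂(volume.restrict (Set.Ioo (a j) (b j))), ε j ≤ ρ j z)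
    (Q : Set (Fin d → ℝ)) (hQ : MeasurableSet Q)
    (hQs : Q ⊆ Set.univ.pi fun j => Set.Ioo (a j) (b j)) (A : Set (Fin d → ℝ))
    (hA : MeasurableSet A) :
    ENNReal.ofReal (∏ j, ε j) * volume (A ∩ Q) ≤ productLaw ρ A := by
  unfold productLaw
  rw [withDensity_apply _ hA]
  have hae : ∀ᵐ z : Fin d → ℝ, ∀ j, z j ∈ Set.Ioo (a j) (b j) → ε j ≤ ρ j (z j) := by
    rw [ae_all_iff]
    intro j
    have := (ae_restrict_iff' measurableSet_Ioo).1 (h j)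
    exact (Measure.quasiMeasurePreserving_eval (fun _ : Fin d => (volume : Measure ℝ)) j).ae this
  calc ENNReal.ofReal (∏ j, ε j) * volume (A ∩ Q)
      = ∫⁻ _ in A ∩ Q, ENNReal.ofReal (∏ j, ε j) := by simp
    _ ≤ ∫⁻ z in A ∩ Q, ENNReal.ofReal (∏ j, ρ j (z j)) := by
        apply lintegral_mono_ae
        refine (ae_restrict_iff' (hA.inter hQ)).2 ?_
        filter_upwards [hae] with z hz hzQ
        apply ENNReal.ofReal_le_ofReal
        exact Finset.prod_le_prod (fun j _ => (hε j).le)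
          fun j _ => hz j (hQs hzQ.2 j (Set.mem_univ _))
    _ ≤ _ := lintegral_mono_set Set.inter_subset_left

/-- The encoder network. -/
def encNet (n N d : ℕ) (δ : ℝ) (p : Fin N → (Fin n → ℝ) × ℝ) (a : Fin d → Fin N → ℝ)
    (b : Fin d → ℝ) : ReLUNet where
  L := 2
  dims := fun j => match j with
    | 0 => n + 1
    | 1 => N
    | _ => d
  A := fun j => match j with
    | 0 => fun i => Fin.cons δ (p i).1
    | 1 => a
    | _ => 0
  b := fun j => match j with
    | 0 => fun i => (p i).2
    | 1 => b
    | _ => 0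

lemma encNet_realize (n N d : ℕ) (δ : ℝ) (p : Fin N → (Fin n → ℝ) × ℝ) (a : Fin d → Fin N → ℝ)
    (b : Fin d → ℝ) (h0 : (encNet n N d δ p a b).dims 0 = n + 1)
    (hout : (encNet n N d δ p a b).dims ((encNet n N d δ p a b).L - 1 + 1) = d)
    (t : ℝ) (x : Fin n → ℝ) (j : Fin d) :
    (encNet n N d δ p a b).realize
      (fun i => (Fin.cons t x : Fin (n + 1) → ℝ) (Fin.cast h0 i)) (Fin.cast hout.symm j)
      = (∑ i, a j i * relu (δ * t + ((∑ k, (p i).1 k * x k) + (p i).2))) + b j := by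
  change (∑ i : Fin N, a j i * relu ((∑ k : Fin (n + 1), (Fin.cons δ (p i).1 : Fin (n + 1) → ℝ) k *
    (Fin.cons t x : Fin (n + 1) → ℝ) k) + (p i).2)) + b j = _
  simp [Fin.sum_univ_succ, add_assoc]

lemma sum_smul_norm {X : Type*} [NormedAddCommGroup X] [NormedSpace ℝ X] {d : ℕ} (e : Fin d → X)
    (y : Fin d → ℝ) : ‖∑ j, y j • e j‖ ≤ ‖y‖ * ∑ j, ‖e j‖ := by
  rw [Finset.mul_sum]
  refine (norm_sum_le _ _).trans (Finset.sum_le_sum fun j _ => ?_)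
  rw [norm_smul]
  gcongr
  exact norm_le_pi_norm y j

/-- **Proposition (NO encoder construction).** Let `D ⊆ ℝ^{d_D}` be a bounded Lipschitz
domain, `X(D) ⊆ L^∞(D)` a Banach space of functions on `D` (modeled by a continuous
injective linear realization map `ι` into bounded functions on `D`), and `μ` a Borel
probability measure on `X(D)` satisfying Assumption (d) whose biorthogonal functionals
are represented by `L^1(D)`-kernels. Then there are a shallow (depth-2) ReLU network
`R : ℝ × ℝ^{d_D} → ℝ^d` and a constant `c > 0` such that the averaging encoder
`E(u) = ⨍_D R(u(x), x) dx` satisfies `E_#μ ≥ c · Unif([0,1]^d)`. -/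
theorem encoder_no
    (dD : ℕ) (Dset : Set (Fin dD → ℝ))
    (hDo : IsOpen Dset) (hDb : Bornology.IsBounded Dset) (hDne : Dset.Nonempty)
    {X : Type*} [NormedAddCommGroup X] [NormedSpace ℝ X] [CompleteSpace X]
    [SecondCountableTopology X] [MeasurableSpace X] [BorelSpace X]
    (ι : X →ₗ[ℝ] ((Fin dD → ℝ) → ℝ)) (hinj : Function.Injective ι)
    (hmeasι : ∀ u, Measurable (ι u))
    (hbdι : ∃ CX : ℝ, ∀ u : X, ∀ x ∈ Dset, |ι u x| ≤ CX * ‖u‖)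
    (d : ℕ) (hd : 1 ≤ d)
    (μ : Measure X) [IsProbabilityMeasure μ]
    (hass : ∃ (e : Fin d → X) (ker : Fin d → (Fin dD → ℝ) → ℝ),
      (∀ j, Integrable (ker j) (volume.restrict Dset)) ∧
      AssumptionD μ d e fun j u => ∫ x in Dset, ι u x * ker j x) :
    ∃ (ψ : ReLUNet) (h2 : ψ.L = 2) (h0 : ψ.dims 0 = dD + 1)
      (hout : ψ.dims (ψ.L - 1 + 1) = d) (c : ℝ), 0 < c ∧
      ENNReal.ofReal c • cubeVol d ≤
        Measure.map
          (fun u (j : Fin d) =>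
            ⨍ x in Dset,
              ψ.realize (fun i => (Fin.cons (ι u x) x : Fin (dD + 1) → ℝ) (Fin.cast h0 i)) (Fin.cast hout.symm j)) μ := by
  classical
  obtain ⟨CX, hCX⟩ := hbdι
  obtain ⟨e, ker, hker, hA⟩ := hass
  obtain ⟨-, hbi, ρ, hρ, hlow, Ξ, mΞ, P, hP, y, ξv, hy, hξv, hindep, hlaw, -, hμ⟩ := hA
  choose al bl hab εl hεl hlb using hlow
  -- the measure on the domain
  have hDvol : volume Dset ≠ ⊤ := hDb.measure_lt_top.ne
  have hDpos : 0 < volume Dset := hDo.measure_pos volume hDne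
  set m := (volume : Measure (Fin dD → ℝ)).restrict Dset with hm
  have hfin : IsFiniteMeasure m := ⟨by simpa [hm] using hDvol.lt_top⟩
  have hmuniv : 0 < m.real Set.univ := by
    simp only [Measure.real, hm, Measure.restrict_apply_univ]
    exact ENNReal.toReal_pos hDpos.ne' hDvol
  set V := m.real Set.univ with hV
  set C := max CX 0 with hC
  have hC0 : 0 ≤ C := le_max_right _ _
  have hbd : ∀ u : X, ∀ᵐ x ∂m, |ι u x| ≤ C * ‖u‖ := by
    intro u
    filter_upwards [ae_restrict_mem hDo.measurableSet] with x hx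
    exact (hCX u x hx).trans (by gcongr; exact le_max_left _ _)
  have hbd2 : ∀ u v : X, ∀ᵐ x ∂m, |ι u x - ι v x| ≤ C * ‖u - v‖ := by
    intro u v
    filter_upwards [hbd (u - v)] with x hx
    simpa using hx
  have hint : ∀ u, Integrable (ι u) m := fun u =>
    Integrable.of_bound (hmeasι u).aestronglyMeasurable (C * ‖u‖) (by simpa using hbd u)
  have hx : ∀ k, Integrable (fun x : Fin dD → ℝ => x k) m := by
    intro k
    obtain ⟨R, hR⟩ := hDb.exists_norm_le
    refine Integrable.of_bound (measurable_pi_apply k).aestronglyMeasurable R ?_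
    filter_upwards [ae_restrict_mem hDo.measurableSet] with x hx
    exact (norm_le_pi_norm x k).trans (hR x hx)
  -- half-spaces
  obtain ⟨N, p, a, hp, hpa⟩ := exists_halfspaces m (fun k => ι (e k)) (fun k => hint _) (by
    intro c hc
    ext j
    have h1 : ∫ x, (∑ k, c k * ι (e k) x) * ker j x ∂m = 0 := by
      rw [integral_congr_ae (g := fun _ => (0 : ℝ))]
      · simp
      · filter_upwards [hc] with x hx
        simp only [Pi.zero_apply] at hx
        simp [hx]
    have h2 : ∀ k, Integrable (fun x => ι (e k) x * ker j x) m := fun k =>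
      (hker j).bdd_mul (hmeasι _).aestronglyMeasurable (c := C * ‖e k‖) (by simpa using hbd (e k))
    have h3 : ∫ x, (∑ k, c k * ι (e k) x) * ker j x ∂m
        = ∑ k, c k * ∫ x, ι (e k) x * ker j x ∂m := by
      simp_rw [Finset.sum_mul, mul_assoc]
      rw [integral_finsetSum _ fun k _ => (h2 k).const_mul _]
      simp_rw [integral_const_mul]
    rw [h3] at h1
    have h4 : ∀ k, ∫ x, ι (e k) x * ker j x ∂m = if j = k then 1 else 0 := fun k => hbi j k
    simpa [h4] using h1)
  -- the box
  obtain ⟨mc, r0, hr0, hQ⟩ : ∃ (mc : Fin d → ℝ) (r0 : ℝ), 0 < r0 ∧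
      Metric.closedBall mc r0 ⊆ Set.univ.pi fun j => Set.Ioo (al j) (bl j) := by
    refine ⟨fun j => (al j + bl j) / 2, ?_⟩
    have ho : IsOpen (Set.univ.pi fun j => Set.Ioo (al j) (bl j)) :=
      isOpen_set_pi Set.finite_univ fun j _ => isOpen_Ioo
    obtain ⟨r, h1, h2⟩ := Metric.nhds_basis_closedBall.mem_iff.1
      (ho.mem_nhds (x := fun j => (al j + bl j) / 2) (by
        intro j _
        have := hab j
        constructor <;> dsimp only <;> linarith))
    exact ⟨r, h1, h2⟩
  -- support point of the law of ξ
  have hκp : IsProbabilityMeasure (Measure.map ξv P) :=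
    Measure.isProbabilityMeasure_map hξv.aemeasurable
  have hνp : IsProbabilityMeasure (Measure.map y P) :=
    Measure.isProbabilityMeasure_map hy.aemeasurable
  obtain ⟨ξ0, hξ0⟩ := Measure.nonempty_support (IsProbabilityMeasure.ne_zero (Measure.map ξv P))
  rw [Measure.mem_support_iff_forall] at hξ0
  -- constants
  set S := ∑ j, ‖e j‖ with hS
  have hS0 : 0 ≤ S := Finset.sum_nonneg fun j _ => norm_nonneg _
  set Bd := ‖ξ0‖ + 1 + (‖mc‖ + r0) * S with hBd
  have hBd0 : 0 ≤ Bd := by positivity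
  have hunorm : ∀ ξ ∈ Metric.ball ξ0 1, ∀ z ∈ Metric.closedBall mc r0,
      ‖ξ + ∑ j, z j • e j‖ ≤ Bd := by
    intro ξ hξ z hz
    have h1 : ‖ξ‖ ≤ ‖ξ0‖ + 1 := by
      have := norm_le_norm_add_norm_sub' ξ ξ0
      rw [mem_ball_iff_norm] at hξ
      linarith
    have h2 : ‖z‖ ≤ ‖mc‖ + r0 := by
      have := norm_le_norm_add_norm_sub' z mc
      rw [mem_closedBall_iff_norm] at hz
      linarith
    refine (norm_add_le _ _).trans (add_le_add h1 ((sum_smul_norm e z).trans ?_))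
    gcongr
  -- choice of δ
  obtain ⟨δ, hδ, hδs⟩ : ∃ δ : ℝ, 0 < δ ∧ ∀ j,
      ∑ i, |a j i| * (m.real (strip (p i) (δ * (C * Bd))) * (C * S)) ≤ 1 / 2 := by
    have hev : ∀ j, ∀ᶠ M : ℕ in Filter.atTop, ∑ i, |a j i| *
        (m.real (strip (p i) ((1 / ((M : ℝ) + 1)) * (C * Bd))) * (C * S)) ≤ 1 / 2 := by
      intro j
      have ht : Filter.Tendsto (fun M : ℕ => ∑ i, |a j i| *
        (m.real (strip (p i) ((1 / ((M : ℝ) + 1)) * (C * Bd))) * (C * S))) Filter.atTop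
          (nhds (∑ i, |a j i| * (0 * (C * S)))) :=
        tendsto_finsetSum _ fun i _ =>
          ((strip_tendsto (p i) (hp i) Dset hDvol (C * Bd) (by positivity)).mul_const _).const_mul _
      simp only [zero_mul, mul_zero, Finset.sum_const_zero] at ht
      exact ht.eventually_le_const (by norm_num)
    obtain ⟨M, hM⟩ := (Filter.eventually_all.2 hev).exists
    exact ⟨1 / ((M : ℝ) + 1), by positivity, hM⟩
  -- the unscaled encoder
  set G : X → Fin d → ℝ := fun u j => ∑ i, a j i * unitT m δ (p i) (ι u) with hG
  set K0 := ∑ j, ∑ i, |a j i| * (C * V) with hK0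
  have hK00 : 0 ≤ K0 := by positivity
  have hGlip : ∀ u v, ‖G u - G v‖ ≤ K0 * ‖u - v‖ := by
    intro u v
    rw [pi_norm_le_iff_of_nonneg (by positivity)]
    intro j
    rw [Real.norm_eq_abs]
    have h1 : (G u - G v) j = ∑ i, a j i * (unitT m δ (p i) (ι u) - unitT m δ (p i) (ι v)) := by
      simp [hG, mul_sub]
    rw [h1]
    calc |∑ i, a j i * (unitT m δ (p i) (ι u) - unitT m δ (p i) (ι v))|
        ≤ ∑ i, |a j i| * ((C * V) * ‖u - v‖) := by
          refine (Finset.abs_sum_le_sum_abs _ _).trans (Finset.sum_le_sum fun i _ => ?_)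
          rw [abs_mul]
          gcongr
          refine (unit_lip m hx δ hδ (p i) _ _ (hint u) (hint v) _ (hbd2 u v)).trans
            (le_of_eq (by ring))
      _ = (∑ i, |a j i| * (C * V)) * ‖u - v‖ := by
          rw [Finset.sum_mul]; simp_rw [mul_assoc]
      _ ≤ K0 * ‖u - v‖ := by
          gcongr
          exact Finset.single_le_sum (f := fun j => ∑ i, |a j i| * (C * V))
            (fun j _ => by positivity) (Finset.mem_univ j)
  have hGapp : ∀ ξ ∈ Metric.ball ξ0 1, ApproximatesLinearOn
      (fun z : Fin d → ℝ => G (ξ + ∑ j, z j • e j))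
      ((ContinuousLinearEquiv.refl ℝ (Fin d → ℝ)) : (Fin d → ℝ) →L[ℝ] (Fin d → ℝ))
      (Metric.closedBall mc r0) (1 / 2 : NNReal) := by
    intro ξ hξ
    rw [ApproximatesLinearOn]
    intro z hz z' hz'
    rw [pi_norm_le_iff_of_nonneg (by positivity)]
    intro j
    rw [Real.norm_eq_abs]
    set u := ξ + ∑ j, z j • e j with hu
    set v := ξ + ∑ j, z' j • e j with hv
    have huv : u - v = ∑ j, (z - z') j • e j := by
      simp [hu, hv, sub_smul]
    have hlin : ∑ i, a j i * ∫ x in hsp (p i), (ι u x - ι v x) ∂m = z j - z' j := by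
      have h1 : ∀ x, ι u x - ι v x = ∑ k, (z k - z' k) * ι (e k) x := by
        intro x
        have := congrFun (congrArg ι huv) x
        simpa [map_sum] using this
      have h2 : ∀ i, ∫ x in hsp (p i), (ι u x - ι v x) ∂m
          = ∑ k, (z k - z' k) * ∫ x in hsp (p i), ι (e k) x ∂m := by
        intro i
        simp_rw [h1]
        rw [integral_finsetSum _ fun k _ => ((hint (e k)).restrict).const_mul _]
        simp_rw [integral_const_mul]
      simp_rw [h2, Finset.mul_sum]
      rw [Finset.sum_comm]
      have h3 : ∀ k, ∑ i, a j i * ((z k - z' k) * ∫ x in hsp (p i), ι (e k) x ∂m)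
          = (z k - z' k) * if j = k then 1 else 0 := by
        intro k
        rw [← hpa j k, Finset.mul_sum]
        exact Finset.sum_congr rfl fun i _ => by ring
      simp_rw [h3]
      simp
    have hnuv : ‖u - v‖ ≤ ‖z - z'‖ * S := by
      rw [huv]; exact sum_smul_norm e (z - z')
    have h1 : (G u - G v - ((ContinuousLinearEquiv.refl ℝ (Fin d → ℝ)) :
        (Fin d → ℝ) →L[ℝ] (Fin d → ℝ)) (z - z')) j
        = ∑ i, a j i * (unitT m δ (p i) (ι u) - unitT m δ (p i) (ι v)
          - ∫ x in hsp (p i), (ι u x - ι v x) ∂m) := by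
      simp only [mul_sub, Finset.sum_sub_distrib, hG] at hlin ⊢
      simp
      linarith
    rw [h1]
    have hbu : ∀ᵐ x ∂m, |ι u x| ≤ C * Bd := by
      filter_upwards [hbd u] with x hx
      exact hx.trans (by gcongr; exact hunorm ξ hξ z hz)
    have hbv : ∀ᵐ x ∂m, |ι v x| ≤ C * Bd := by
      filter_upwards [hbd v] with x hx
      exact hx.trans (by gcongr; exact hunorm ξ hξ z' hz')
    have hbuv : ∀ᵐ x ∂m, |ι u x - ι v x| ≤ C * (‖z - z'‖ * S) := by
      filter_upwards [hbd2 u v] with x hx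
      exact hx.trans (by gcongr)
    calc |∑ i, a j i * (unitT m δ (p i) (ι u) - unitT m δ (p i) (ι v)
          - ∫ x in hsp (p i), (ι u x - ι v x) ∂m)|
        ≤ ∑ i, |a j i| * (m.real (strip (p i) (δ * (C * Bd))) * (C * (‖z - z'‖ * S))) := by
          refine (Finset.abs_sum_le_sum_abs _ _).trans (Finset.sum_le_sum fun i _ => ?_)
          rw [abs_mul]
          gcongr
          exact unit_approx m hx δ hδ (p i) _ _ (hint u) (hint v) _ _ hbuv hbu hbv
      _ = (∑ i, |a j i| * (m.real (strip (p i) (δ * (C * Bd))) * (C * S))) * ‖z - z'‖ := by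
          rw [Finset.sum_mul]
          exact Finset.sum_congr rfl fun i _ => by ring
      _ ≤ ((1 / 2 : NNReal) : ℝ) * ‖z - z'‖ := by
          gcongr
          simpa using hδs j
  -- scaling
  set u0 := ξ0 + ∑ j, mc j • e j with hu0
  set Λ := 2 / r0 with hΛ
  have hΛ0 : 0 < Λ := by positivity
  set r := min 1 (r0 / 4 / (K0 + 1)) with hr
  have hrpos : 0 < r := by positivity
  set E : X → Fin d → ℝ := fun u j => Λ * G u j + (1 / 2 - Λ * G u0 j) with hE
  have hGcont : Continuous G :=
    (LipschitzWith.of_dist_le_mul (K := ⟨K0, hK00⟩) fun u v => by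
      rw [dist_eq_norm, dist_eq_norm]; exact hGlip u v).continuous
  have hEcont : Continuous E := by
    have : ∀ j, Continuous fun u => G u j := fun j => (continuous_apply j).comp hGcont
    exact continuous_pi fun j => ((this j).const_mul _).add continuous_const
  have hlipE : ∀ ξ ∈ Metric.ball ξ0 r, LipschitzOnWith (Real.toNNReal (Λ * (3 / 2)))
      (fun z : Fin d → ℝ => E (ξ + ∑ j, z j • e j)) (Metric.closedBall mc r0) := by
    intro ξ hξ
    have hξ1 : ξ ∈ Metric.ball ξ0 1 := Metric.ball_subset_ball (min_le_left _ _) hξ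
    apply LipschitzOnWith.of_dist_le_mul
    intro z hz z' hz'
    rw [Real.coe_toNNReal _ (by positivity), dist_eq_norm, dist_eq_norm]
    have h1 := hGapp ξ hξ1 z hz z' hz'
    have h2 : E (ξ + ∑ j, z j • e j) - E (ξ + ∑ j, z' j • e j)
        = Λ • (G (ξ + ∑ j, z j • e j) - G (ξ + ∑ j, z' j • e j)) := by
      ext j; simp [hE]; ring
    rw [h2, norm_smul, Real.norm_of_nonneg hΛ0.le, mul_assoc]
    gcongr
    have h3 := norm_le_norm_add_norm_sub' (G (ξ + ∑ j, z j • e j) - G (ξ + ∑ j, z' j • e j)) (z - z')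
    have h4 : ‖G (ξ + ∑ j, z j • e j) - G (ξ + ∑ j, z' j • e j) - (z - z')‖
        ≤ 1 / 2 * ‖z - z'‖ := by simpa using h1
    linarith
  have hsurjE : ∀ ξ ∈ Metric.ball ξ0 r, unitCube d ⊆
      (fun z : Fin d → ℝ => E (ξ + ∑ j, z j • e j)) '' (Metric.closedBall mc r0) := by
    intro ξ hξ w hw
    have hξ1 : ξ ∈ Metric.ball ξ0 1 := Metric.ball_subset_ball (min_le_left _ _) hξ
    have hsur : ∀ t : Fin d → ℝ, ‖t - G (ξ + ∑ j, mc j • e j)‖ ≤ r0 / 2 →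
        ∃ z ∈ Metric.closedBall mc r0, G (ξ + ∑ j, z j • e j) = t := by
      intro t ht
      have hone : ((ContinuousLinearEquiv.refl ℝ (Fin d → ℝ)).toNonlinearRightInverse.nnnorm : ℝ)
          ≤ 1 := by
        change ‖((ContinuousLinearEquiv.refl ℝ (Fin d → ℝ)).symm : (Fin d → ℝ) →L[ℝ] (Fin d → ℝ))‖ ≤ 1
        exact ContinuousLinearMap.norm_id_le
      have hone' : ((ContinuousLinearEquiv.refl ℝ (Fin d → ℝ)).toNonlinearRightInverse.nnnorm : ℝ)
          = 1 := by
        refine le_antisymm hone ?_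
        have hne : Nonempty (Fin d) := ⟨⟨0, hd⟩⟩
        change 1 ≤ ‖((ContinuousLinearEquiv.refl ℝ (Fin d → ℝ)).symm : (Fin d → ℝ) →L[ℝ] (Fin d → ℝ))‖
        exact (ContinuousLinearMap.norm_id (𝕜 := ℝ) (E := Fin d → ℝ)).ge
      have h1 := (hGapp ξ hξ1).surjOn_closedBall_of_nonlinearRightInverse
        (ContinuousLinearEquiv.refl ℝ (Fin d → ℝ)).toNonlinearRightInverse hr0.le subset_rfl
      rw [hone'] at h1
      obtain ⟨z, hz, hzt⟩ := h1 (a := t) (by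
        rw [mem_closedBall_iff_norm]
        refine ht.trans (le_of_eq ?_)
        push_cast
        ring)
      exact ⟨z, hz, hzt⟩
    obtain ⟨z, hz, hzt⟩ := hsur (fun j => (w j - (1 / 2 - Λ * G u0 j)) / Λ) (by
      have h1 : ‖(fun j => (w j - (1 / 2 - Λ * G u0 j)) / Λ) - G u0‖ ≤ r0 / 4 := by
        rw [pi_norm_le_iff_of_nonneg (by positivity)]
        intro j
        have hw1 : 0 ≤ w j := hw.1 j
        have hw2 : w j ≤ 1 := hw.2 j
        have : ((fun j => (w j - (1 / 2 - Λ * G u0 j)) / Λ) - G u0) j = (w j - 1 / 2) * (r0 / 2) := by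
          simp only [Pi.sub_apply]
          rw [hΛ]
          field_simp
          ring
        rw [this, Real.norm_eq_abs, abs_mul, abs_of_pos (half_pos hr0)]
        have : |w j - 1 / 2| ≤ 1 / 2 := by rw [abs_le]; constructor <;> linarith
        nlinarith
      have h2 : ‖G u0 - G (ξ + ∑ j, mc j • e j)‖ ≤ r0 / 4 := by
        refine (hGlip _ _).trans ?_
        have h3 : ‖u0 - (ξ + ∑ j, mc j • e j)‖ ≤ r0 / 4 / (K0 + 1) := by
          rw [hu0, add_sub_add_right_eq_sub, norm_sub_rev]
          rw [mem_ball_iff_norm] at hξ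
          exact hξ.le.trans (min_le_right _ _)
        calc K0 * ‖u0 - (ξ + ∑ j, mc j • e j)‖ ≤ (K0 + 1) * (r0 / 4 / (K0 + 1)) := by
              gcongr; linarith
          _ = r0 / 4 := by field_simp
      have := norm_sub_le_norm_sub_add_norm_sub (fun j => (w j - (1 / 2 - Λ * G u0 j)) / Λ) (G u0)
        (G (ξ + ∑ j, mc j • e j))
      linarith)
    refine ⟨z, hz, ?_⟩
    ext j
    simp only [hE]
    rw [hzt]
    field_simp
    ring
  -- the law
  have hΦ : Measurable fun q : (Fin d → ℝ) × X => q.2 + ∑ j, q.1 j • e j := by fun_prop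
  have hFm : Measurable fun q : (Fin d → ℝ) × X => E (q.2 + ∑ j, q.1 j • e j) :=
    hEcont.measurable.comp hΦ
  have hmapE : Measure.map E μ = Measure.map
      (fun q : (Fin d → ℝ) × X => E (q.2 + ∑ j, q.1 j • e j))
      ((Measure.map y P).prod (Measure.map ξv P)) := by
    rw [← hindep.map_prod_eq_prod_map_map hy.aemeasurable hξv.aemeasurable,
      Measure.map_map hFm (hy.prodMk hξv), hμ, Measure.map_map hEcont.measurable (by fun_prop)]
    rfl
  set ε := ∏ j, εl j with hεdef
  have hε0 : 0 < ε := Finset.prod_pos fun j _ => hεl j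
  set κU := (Measure.map ξv P).real (Metric.ball ξ0 r) with hκU
  have hκ0 : 0 < κU :=
    ENNReal.toReal_pos (hξ0 _ (Metric.ball_mem_nhds _ hrpos)).ne' (measure_ne_top _ _)
  set K := Λ * (3 / 2) with hK
  have hKpos : 0 < K := by positivity
  have hfinal : ENNReal.ofReal (ε * κU / K ^ d) • cubeVol d ≤ Measure.map E μ := by
    rw [Measure.le_iff]
    intro B hB
    have h1 := push_bound (Measure.map y P) (Measure.map ξv P) _ hFm (Metric.ball ξ0 r)
      measurableSet_ball (Metric.closedBall mc r0) (ENNReal.ofReal ε)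
      (fun A hA => by
        rw [hlaw]
        exact law_bound ρ al bl εl hεl hlb _ measurableSet_closedBall hQ A hA)
      (Real.toNNReal K) hlipE hsurjE B hB
    rw [← hmapE] at h1
    have h2 : (Measure.map ξv P) (Metric.ball ξ0 r) = ENNReal.ofReal κU := by
      rw [hκU, ofReal_measureReal]
    have h3 : ((Real.toNNReal K : NNReal) : ℝ≥0∞) ^ d = ENNReal.ofReal (K ^ d) := by
      rw [ENNReal.ofReal_pow hKpos.le]; rfl
    rw [h2, h3] at h1
    rw [Measure.smul_apply, smul_eq_mul, cubeVol, Measure.restrict_apply hB,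
      ENNReal.ofReal_div_of_pos (by positivity), ENNReal.ofReal_mul hε0.le,
      ENNReal.div_eq_inv_mul, mul_assoc]
    rw [ENNReal.inv_mul_le_iff (by simpa using by positivity) ENNReal.ofReal_ne_top]
    refine le_trans (le_of_eq ?_) h1
    ring
  refine ⟨encNet dD N d δ p (fun j i => Λ * V * a j i / δ) (fun j => 1 / 2 - Λ * G u0 j),
    rfl, rfl, rfl, ε * κU / K ^ d, by positivity, ?_⟩
  refine le_of_le_of_eq hfinal ?_
  congr 1
  funext u j
  refine Eq.symm ?_
  trans ⨍ x in Dset, ((∑ i, (Λ * V * a j i / δ) *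
      relu (δ * ι u x + ((∑ k, (p i).1 k * x k) + (p i).2))) + (1 / 2 - Λ * G u0 j))
  · congr 1
    funext x
    exact encNet_realize dD N d δ p (fun j i => Λ * V * a j i / δ)
      (fun j => 1 / 2 - Λ * G u0 j) rfl rfl (ι u x) x j
  rw [average_eq]
  have hi : ∀ i, Integrable (fun x => (Λ * V * a j i / δ) *
      relu (δ * ι u x + ((∑ k, (p i).1 k * x k) + (p i).2))) m := fun i =>
    (unit_int m hx δ (p i) _ (hint u)).const_mul _
  rw [integral_add (integrable_finsetSum _ fun i _ => hi i) (integrable_const _),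
    integral_finsetSum _ fun i _ => hi i]
  simp_rw [integral_const_mul]
  simp only [hE, hG, unitT, integral_div, integral_const, smul_eq_mul, ← hm, ← hV, mul_add]
  rw [inv_mul_cancel_left₀ hmuniv.ne', Finset.mul_sum, Finset.mul_sum]
  congr 1
  rw [Finset.mul_sum]
  refine Finset.sum_congr rfl fun i _ => ?_
  field_simp

end
end

section
/- Let D ⊂ ℝ^d be a bounded Lipschitz domain. For every f ∈ C^1(D̄) and every ε > 0, there exists a shallow ReLU neural network ψ: ℝ^d → ℝ of the form ψ(x) = Σ_{j=1}^N a_j σ(w_j·x + b_j), with a_j, b_j ∈ ℝ and w_j ∈ ℝ^d, such that ‖ψ − f‖_{W^{1,∞}(D)} ≤ ε. -/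
open MeasureTheory ENNReal
open scoped RealInnerProductSpace

noncomputable section

lemma relu_hasDerivWithinAt (s t : ℝ) :
    HasDerivWithinAt (fun t => relu (t - s)) (if s ≤ t then 1 else 0) (Set.Ici t) t := by
  split_ifs with h
  · have : HasDerivWithinAt (fun t => t - s) 1 (Set.Ici t) t :=
      ((hasDerivAt_id t).sub_const s).hasDerivWithinAt
    refine this.congr (fun y hy => ?_) ?_
    · have : t ≤ y := hy
      simp only [relu]; exact max_eq_left (by linarith)
    · simp only [relu]; exact max_eq_left (by linarith)
  · have : HasDerivAt (fun t => relu (t - s)) 0 t := by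
      refine (hasDerivAt_const t (0:ℝ)).congr_of_eventuallyEq ?_
      filter_upwards [Iio_mem_nhds (not_le.mp h)] with y hy
      have : y < s := hy
      simp only [relu]; exact max_eq_right (by linarith)
    exact this.hasDerivWithinAt

lemma relu_hasDerivAt (s t : ℝ) (hst : t ≠ s) :
    HasDerivAt (fun t => relu (t - s)) (if s ≤ t then 1 else 0) t := by
  split_ifs with h
  · have : HasDerivAt (fun t => t - s) 1 t := (hasDerivAt_id t).sub_const s
    refine this.congr_of_eventuallyEq ?_
    filter_upwards [Ioi_mem_nhds (lt_of_le_of_ne h hst.symm)] with y hy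
    have : s < y := hy
    simp only [relu]; exact max_eq_left (by linarith)
  · refine (hasDerivAt_const t (0:ℝ)).congr_of_eventuallyEq ?_
    filter_upwards [Iio_mem_nhds (not_le.mp h)] with y hy
    have : y < s := hy
    simp only [relu]; exact max_eq_right (by linarith)

lemma sum_telescope (H : ℕ → ℝ) (m n : ℕ) :
    ∑ k ∈ Finset.range n, (H (k+1) - H k) * (if k < m then (1:ℝ) else 0) = H (min n m) - H 0 := by
  induction n with
  | zero => simp
  | succ n ih =>
    rw [Finset.sum_range_succ, ih]
    by_cases h : n < m
    · rw [if_pos h, min_eq_left h.le, min_eq_left h]; ring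
    · rw [if_neg h, min_eq_right (not_lt.mp h), min_eq_right (by omega)]; ring

lemma oneD (g g' : ℝ → ℝ) (hg : ∀ t, HasDerivAt g (g' t) t) (hc : Continuous g')
    (R : ℝ) (hR : 0 < R) (ε : ℝ) (hε : 0 < ε) :
    ∃ (n : ℕ) (c : ℝ) (a τ : ℕ → ℝ), ∀ t ∈ Set.Icc (-R) R,
      |c + ∑ k ∈ Finset.range n, a k * relu (t - τ k) - g t| ≤ ε ∧
      |∑ k ∈ Finset.range n, a k * (if τ k ≤ t then 1 else 0) - g' t| ≤ ε := by
  obtain ⟨e, he, he1, he2⟩ : ∃ e : ℝ, 0 < e ∧ e ≤ ε ∧ e * (2 * R) ≤ ε := by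
    refine ⟨ε / (1 + 2 * R), by positivity, ?_, ?_⟩
    · rw [div_le_iff₀ (by positivity)]; nlinarith
    · rw [div_mul_eq_mul_div, div_le_iff₀ (by positivity)]; nlinarith
  have huc := isCompact_Icc.uniformContinuousOn_of_continuous
    (hc.continuousOn (s := Set.Icc (-R) R))
  obtain ⟨δ, hδ, hδ'⟩ := Metric.uniformContinuousOn_iff.mp huc e he
  set h := δ / 2 with hh
  have hpos : 0 < h := by positivity
  set n := ⌊2 * R / h⌋₊ + 1 with hn
  set τ : ℕ → ℝ := fun k => -R + k * h with hτ
  set H : ℕ → ℝ := fun k => if k = 0 then 0 else g' (τ (k - 1)) with hH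
  set a : ℕ → ℝ := fun k => H (k+1) - H k with ha
  have hder : ∀ t ∈ Set.Icc (-R) R,
      |∑ k ∈ Finset.range n, a k * (if τ k ≤ t then 1 else 0) - g' t| ≤ e := by
    rintro t ⟨ht1, ht2⟩
    set m := ⌊(t + R) / h⌋₊ with hm
    have hm0 : 0 ≤ (t + R) / h := div_nonneg (by linarith) hpos.le
    have hiff : ∀ k : ℕ, τ k ≤ t ↔ k < m + 1 := by
      intro k
      rw [Nat.lt_succ_iff, hm, Nat.le_floor_iff hm0, le_div_iff₀ hpos]
      simp only [hτ]
      constructor <;> intro h <;> linarith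
    simp only [hiff]
    rw [sum_telescope H (m+1) n]
    have hmn : m + 1 ≤ n := by
      rw [hn, hm]
      have : (t + R) / h ≤ 2 * R / h := by gcongr; linarith
      have := Nat.floor_le_floor this
      omega
    rw [min_eq_right hmn]
    have h1 : τ m ≤ t := (hiff m).2 (by omega)
    have h2 : t < τ m + h := by
      have := (hiff (m+1)).not.2 (by omega)
      simp only [hτ, not_le] at this ⊢
      push_cast at this
      linarith
    have h3 : -R ≤ τ m := by simp only [hτ]; have : 0 ≤ (m:ℝ) * h := by positivity
                             linarith
    have := hδ' (τ m) ⟨h3, by linarith⟩ t ⟨ht1, ht2⟩ (by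
      rw [Real.dist_eq, abs_lt]; constructor <;> linarith)
    simp only [hH]
    simpa [Real.dist_eq] using this.le
  refine ⟨n, g (-R), a, τ, fun t ht => ⟨?_, (hder t ht).trans he1⟩⟩
  have key := norm_image_sub_le_of_norm_deriv_right_le_segment (a := -R) (b := R)
    (f := fun t => g (-R) + ∑ k ∈ Finset.range n, a k * relu (t - τ k) - g t)
    (f' := fun t => ∑ k ∈ Finset.range n, a k * (if τ k ≤ t then 1 else 0) - g' t) (C := e)
    ?_ ?_ ?_ t ht
  · have h0 : ∑ k ∈ Finset.range n, a k * relu (-R - τ k) = 0 := by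
      refine Finset.sum_eq_zero fun k _ => ?_
      have : relu (-R - τ k) = 0 := by
        simp only [relu, hτ]
        apply max_eq_right
        have : 0 ≤ (k:ℝ) * h := by positivity
        linarith
      rw [this, mul_zero]
    rw [h0] at key
    simp only [add_zero, sub_self, sub_zero, Real.norm_eq_abs] at key
    refine key.trans (le_trans ?_ he2)
    have := ht.2
    gcongr
    linarith
  · apply Continuous.continuousOn
    have : Continuous g := continuous_iff_continuousAt.2 fun t => (hg t).continuousAt
    unfold relu
    fun_prop
  · intro x _
    refine HasDerivWithinAt.sub ?_ (hg x).hasDerivWithinAt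
    refine HasDerivWithinAt.const_add _ ?_
    exact HasDerivWithinAt.fun_sum fun k _ => (relu_hasDerivWithinAt (τ k) x).const_mul (a k)
  · intro x hx
    exact hder x ⟨hx.1, hx.2.le⟩

set_option linter.unusedSectionVars false

section General

variable {E : Type*} [NormedAddCommGroup E] [InnerProductSpace ℝ E] [FiniteDimensional ℝ E]
  [MeasurableSpace E] [BorelSpace E]

def neuron (p : E × ℝ) : E → ℝ :=
  fun x => relu (⟪p.1, x⟫ + p.2)

variable (E) in
def nets : Submodule ℝ (E → ℝ) :=
  Submodule.span ℝ (Set.range neuron)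

lemma neuron_mem (w : E) (b : ℝ) :
    (fun x => relu (⟪w, x⟫ + b)) ∈ nets E :=
  Submodule.subset_span ⟨(w, b), rfl⟩

lemma const_mem (c : ℝ) : (fun _ : E => c) ∈ nets E := by
  have := (nets E).smul_mem c (neuron_mem (0 : E) 1)
  convert this using 1
  ext x
  simp [relu]

lemma hyperplane_null (w : E) (hw : w ≠ 0) (s : ℝ) :
    ∀ᵐ x : E, ⟪w, x⟫ ≠ s := by
  have hww : ⟪w, w⟫ ≠ 0 := by simpa using hw
  have h := Measure.addHaar_affineSubspace (volume : Measure (E))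
    (AffineSubspace.mk' ((s / ⟪w, w⟫) • w) (LinearMap.ker (innerSL ℝ w).toLinearMap)) ?_
  · rw [ae_iff]
    convert h using 2
    ext x
    simp [AffineSubspace.mem_mk', inner_sub_right, inner_smul_right, sub_eq_zero, hw]
  · intro h
    have := congrArg AffineSubspace.direction h
    rw [AffineSubspace.direction_mk', AffineSubspace.direction_top] at this
    have h2 : w ∈ LinearMap.ker (innerSL ℝ w).toLinearMap := by rw [this]; trivial
    simp at h2
    exact hw h2

def Approx (K : Set (E)) (h : E → ℝ)
    (h' : E → E →L[ℝ] ℝ) : Prop :=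
  ∀ ε > 0, ∃ ψ ∈ nets E, ∀ᵐ x : E, x ∈ K →
    |ψ x - h x| ≤ ε ∧ ∃ L, HasFDerivAt ψ L x ∧ ‖L - h' x‖ ≤ ε

lemma approx_ridge (g g' : ℝ → ℝ) (hg : ∀ t, HasDerivAt g (g' t) t) (hc : Continuous g')
    (r : ℝ) (hr : 0 < r) (w : E) :
    Approx (Metric.closedBall 0 r) (fun x => g ⟪w, x⟫) (fun x => g' ⟪w, x⟫ • innerSL ℝ w) := by
  intro ε hε
  by_cases hw : w = 0
  · subst hw
    refine ⟨_, const_mem (E := E) (g 0), ae_of_all _ fun x _ => ⟨by simp [hε.le], 0,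
      hasFDerivAt_const _ _, by simp [hε.le]⟩⟩
  have hw' : 0 < ‖w‖ := norm_pos_iff.2 hw
  obtain ⟨n, c, a, τ, H⟩ := oneD g g' hg hc (‖w‖ * r) (by positivity) (min ε (ε / ‖w‖))
    (by positivity)
  refine ⟨(fun x => c) + ∑ k ∈ Finset.range n, a k • (fun x => relu (⟪w, x⟫ + (- τ k))),
    (nets E).add_mem (const_mem c) ((nets E).sum_mem fun k _ => (nets E).smul_mem _
      (neuron_mem w _)), ?_⟩
  have hae : ∀ᵐ x : E, ∀ k : ℕ, ⟪w, x⟫ ≠ τ k :=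
    ae_all_iff.2 fun k => hyperplane_null w hw _
  filter_upwards [hae] with x hx hxK
  have hxr : ‖x‖ ≤ r := by simpa using hxK
  have hin : |⟪w, x⟫| ≤ ‖w‖ * r := (abs_real_inner_le_norm w x).trans (by gcongr)
  obtain ⟨H1, H2⟩ := H _ (abs_le.1 hin)
  constructor
  · simp only [Pi.add_apply, Finset.sum_apply, Pi.smul_apply, smul_eq_mul, ← sub_eq_add_neg]
    exact H1.trans (min_le_left _ _)
  · refine ⟨(∑ k ∈ Finset.range n, a k * (if τ k ≤ ⟪w, x⟫ then 1 else 0)) • innerSL ℝ w, ?_, ?_⟩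
    · have h1 : HasDerivAt (fun t => c + ∑ k ∈ Finset.range n, a k * relu (t - τ k))
        (∑ k ∈ Finset.range n, a k * (if τ k ≤ ⟪w, x⟫ then 1 else 0)) ⟪w, x⟫ := by
        refine HasDerivAt.const_add _ ?_
        exact HasDerivAt.fun_sum fun k _ => (relu_hasDerivAt (τ k) _ (hx k)).const_mul (a k)
      have h2 : HasFDerivAt (fun x => ⟪w, x⟫) (innerSL ℝ w) x := (innerSL ℝ w).hasFDerivAt
      have h3 := h1.comp_hasFDerivAt x h2
      have heq : ((fun x => c) + ∑ k ∈ Finset.range n, a k • (fun x => relu (⟪w, x⟫ + (- τ k))))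
          = (fun t => c + ∑ k ∈ Finset.range n, a k * relu (t - τ k)) ∘ (fun x => ⟪w, x⟫) := by
        ext y
        simp [sub_eq_add_neg]
      rw [heq]
      exact h3
    · refine (congrArg norm (sub_smul (∑ k ∈ Finset.range n, a k * (if τ k ≤ ⟪w, x⟫ then 1 else 0))
        (g' ⟪w, x⟫) (innerSL ℝ w : E →L[ℝ] ℝ)).symm).trans_le ?_
      rw [norm_smul, innerSL_apply_norm, Real.norm_eq_abs]
      calc _ ≤ (ε / ‖w‖) * ‖w‖ := by gcongr; exact H2.trans (min_le_right _ _)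
        _ = ε := by field_simp

lemma approx_of_limit {K : Set E} {h : E → ℝ} {h' : E → E →L[ℝ] ℝ}
    (H : ∀ ε > 0, ∃ g g', Approx K g g' ∧ ∀ x ∈ K, |g x - h x| ≤ ε ∧ ‖g' x - h' x‖ ≤ ε) :
    Approx K h h' := by
  intro ε hε
  obtain ⟨g, g', hg, hgh⟩ := H (ε / 2) (by positivity)
  obtain ⟨ψ, hψ, hae⟩ := hg (ε / 2) (by positivity)
  refine ⟨ψ, hψ, ?_⟩
  filter_upwards [hae] with x hx hxK
  obtain ⟨h1, L, hL, h2⟩ := hx hxK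
  obtain ⟨h3, h4⟩ := hgh x hxK
  refine ⟨(abs_sub_le _ (g x) _).trans (by linarith), L, hL, ?_⟩
  have := norm_sub_le_norm_sub_add_norm_sub L (g' x) (h' x)
  linarith

instance compactSpace_ball (r : ℝ) : CompactSpace (Metric.closedBall (0 : E) r) :=
  have : ProperSpace E := FiniteDimensional.proper_real E
  isCompact_iff_compactSpace.1 (isCompact_closedBall 0 r)

/-- the approximable pairs, as a submodule of a space of continuous functions -/
def apS (r : ℝ) : Submodule ℝ C(Metric.closedBall (0 : E) r, ℝ × E) where
  carrier := {F | ∀ ε > 0, ∃ ψ ∈ nets E, ∀ᵐ x : E, ∀ hx : x ∈ Metric.closedBall (0 : E) r,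
    |ψ x - (F ⟨x, hx⟩).1| ≤ ε ∧ ∃ L : E →L[ℝ] ℝ, HasFDerivAt ψ L x ∧ ‖L - innerSL ℝ (F ⟨x, hx⟩).2‖ ≤ ε}
  zero_mem' := by
    intro ε hε
    refine ⟨0, (nets E).zero_mem, ae_of_all _ fun x hx => ⟨by simp [hε.le], 0,
      hasFDerivAt_const _ _, by simp [hε.le]⟩⟩
  add_mem' := by
    intro F G hF hG ε hε
    obtain ⟨ψ, hψ, h1⟩ := hF (ε / 2) (by positivity)
    obtain ⟨φ, hφ, h2⟩ := hG (ε / 2) (by positivity)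
    refine ⟨ψ + φ, (nets E).add_mem hψ hφ, ?_⟩
    filter_upwards [h1, h2] with x hx1 hx2 hx
    obtain ⟨a1, L, hL, a2⟩ := hx1 hx
    obtain ⟨b1, M, hM, b2⟩ := hx2 hx
    refine ⟨?_, L + M, hL.add hM, ?_⟩
    · simp only [Pi.add_apply, ContinuousMap.add_apply, Prod.fst_add]
      rw [add_sub_add_comm]
      exact (abs_add_le _ _).trans (by linarith)
    · simp only [ContinuousMap.add_apply, Prod.snd_add, map_add]
      rw [add_sub_add_comm]
      exact (norm_add_le _ _).trans (by linarith)
  smul_mem' := by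
    intro c F hF ε hε
    have hc : 0 < |c| + 1 := by positivity
    obtain ⟨ψ, hψ, h1⟩ := hF (ε / (|c| + 1)) (by positivity)
    refine ⟨c • ψ, (nets E).smul_mem c hψ, ?_⟩
    have hle : |c| * (ε / (|c| + 1)) ≤ ε := by
      rw [mul_div_assoc', div_le_iff₀ hc]; nlinarith [abs_nonneg c]
    filter_upwards [h1] with x hx1 hx
    obtain ⟨a1, L, hL, a2⟩ := hx1 hx
    refine ⟨?_, c • L, hL.const_smul c, ?_⟩
    · simp only [Pi.smul_apply, ContinuousMap.smul_apply, Prod.smul_fst, smul_eq_mul]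
      rw [← mul_sub, abs_mul]
      exact (mul_le_mul_of_nonneg_left a1 (abs_nonneg c)).trans hle
    · have e : innerSL ℝ ((c • F) ⟨x, hx⟩).2 = c • (innerSL ℝ (F ⟨x, hx⟩).2 : E →L[ℝ] ℝ) := by
        ext y; simp
      rw [e]
      refine (congrArg norm (smul_sub c L (innerSL ℝ (F ⟨x, hx⟩).2)).symm).trans_le ?_
      rw [norm_smul, Real.norm_eq_abs]
      exact (mul_le_mul_of_nonneg_left a2 (abs_nonneg c)).trans hle

lemma apS_closed (r : ℝ) : IsClosed ((apS r : Submodule ℝ C(Metric.closedBall (0 : E) r, ℝ × E)) :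
    Set C(Metric.closedBall (0 : E) r, ℝ × E)) := by
  refine isClosed_of_closure_subset fun F hF ε hε => ?_
  obtain ⟨G, hG, hd⟩ := Metric.mem_closure_iff.1 hF (ε / 2) (by positivity)
  obtain ⟨ψ, hψ, h1⟩ := hG (ε / 2) (by positivity)
  refine ⟨ψ, hψ, ?_⟩
  filter_upwards [h1] with x hx1 hx
  obtain ⟨a1, L, hL, a2⟩ := hx1 hx
  have h3 : ‖G ⟨x, hx⟩ - F ⟨x, hx⟩‖ ≤ ε / 2 := by
    rw [← dist_eq_norm, dist_comm]
    exact (ContinuousMap.dist_apply_le_dist _).trans hd.le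
  have h4 : |(G ⟨x, hx⟩).1 - (F ⟨x, hx⟩).1| ≤ ε / 2 := (norm_fst_le _).trans h3
  have h5 : ‖(G ⟨x, hx⟩).2 - (F ⟨x, hx⟩).2‖ ≤ ε / 2 := (norm_snd_le _).trans h3
  refine ⟨(abs_sub_le _ (G ⟨x, hx⟩).1 _).trans (by linarith), L, hL, ?_⟩
  have h6 : ‖(innerSL ℝ (G ⟨x, hx⟩).2 : E →L[ℝ] ℝ) - innerSL ℝ (F ⟨x, hx⟩).2‖ ≤ ε / 2 := by
    rw [← map_sub, innerSL_apply_norm]; exact h5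
  have := norm_sub_le_norm_sub_add_norm_sub L (innerSL ℝ (G ⟨x, hx⟩).2) (innerSL ℝ (F ⟨x, hx⟩).2)
  linarith

lemma integral_mem_closed {X : Type*} [NormedAddCommGroup X] [NormedSpace ℝ X] [CompleteSpace X]
    (S : Submodule ℝ X) (hS : IsClosed (S : Set X)) (F : E → X) (hF : ∀ ξ, F ξ ∈ S) :
    (∫ ξ, F ξ) ∈ S := by
  have : CompleteSpace S := hS.completeSpace_coe
  have h := S.subtypeₗᵢ.integral_comp_comm (μ := (volume : Measure E)) (fun ξ => (⟨F ξ, hF ξ⟩ : S))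
  have h2 : (∫ ξ, F ξ) = S.subtypeₗᵢ (∫ ξ, (⟨F ξ, hF ξ⟩ : S)) := by rw [← h]; rfl
  rw [h2]
  exact (∫ ξ, (⟨F ξ, hF ξ⟩ : S)).2

open SchwartzMap FourierTransform in
lemma approx_smooth (u : E → ℝ) (hu : ContDiff ℝ (⊤ : ℕ∞) u) (hc : HasCompactSupport u)
    (r : ℝ) (hr : 0 < r) : Approx (Metric.closedBall 0 r) u (fderiv ℝ u) := by
  have hcC : HasCompactSupport (fun x => (u x : ℂ)) := hc.comp_left (g := fun t : ℝ => (t : ℂ)) rfl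
  have huC : ContDiff ℝ (⊤ : ℕ∞) (fun x => (u x : ℂ)) := Complex.ofRealCLM.contDiff.comp hu
  set U : 𝓢(E, ℂ) := hcC.toSchwartzMap huC with hU
  set v : 𝓢(E, ℂ) := 𝓕⁻ U with hv
  have hvU : 𝓕 v = U := FourierTransform.fourier_fourierInv_eq U
  let p : E → ℝ := fun ξ => (v ξ).re
  let q : E → ℝ := fun ξ => (v ξ).im
  have hp : Continuous p := Complex.continuous_re.comp v.continuous
  have hq : Continuous q := Complex.continuous_im.comp v.continuous
  let g : E → ℝ → ℝ := fun ξ t => Real.cos t * p ξ + Real.sin t * q ξ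
  let g' : E → ℝ → ℝ := fun ξ t => -Real.sin t * p ξ + Real.cos t * q ξ
  let W : E → E := fun ξ => (2 * Real.pi) • ξ
  have hW : Continuous W := by fun_prop
  let h : E → E → ℝ := fun x ξ => g ξ ⟪W ξ, x⟫
  let k : E → E → E := fun x ξ => g' ξ ⟪W ξ, x⟫ • W ξ
  let h' : E → E → E →L[ℝ] ℝ := fun x ξ => g' ξ ⟪W ξ, x⟫ • (innerSL ℝ (W ξ) : E →L[ℝ] ℝ)
  have hg : ∀ ξ t, HasDerivAt (g ξ) (g' ξ t) t := fun ξ t =>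
    ((Real.hasDerivAt_cos t).mul_const _).add ((Real.hasDerivAt_sin t).mul_const _)
  have hh' : ∀ x ξ, HasFDerivAt (fun x => h x ξ) (h' x ξ) x := fun x ξ =>
    (hg ξ _).comp_hasFDerivAt x ((innerSL ℝ (W ξ) : E →L[ℝ] ℝ).hasFDerivAt)
  have hcont : Continuous (fun z : E × E => h z.2 z.1) := by
    simp only [h, g]; fun_prop
  have hcont' : Continuous (fun z : E × E => h' z.2 z.1) := by
    simp only [h', g']; fun_prop
  have hpb : ∀ ξ, |p ξ| ≤ ‖v ξ‖ := fun ξ => Complex.abs_re_le_norm _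
  have hqb : ∀ ξ, |q ξ| ≤ ‖v ξ‖ := fun ξ => Complex.abs_im_le_norm _
  have hgb : ∀ ξ t, |g ξ t| ≤ 2 * ‖v ξ‖ := by
    intro ξ t
    refine (abs_add_le _ _).trans ?_
    rw [abs_mul, abs_mul]
    have := mul_le_mul (Real.abs_cos_le_one t) (hpb ξ) (abs_nonneg _) zero_le_one
    have := mul_le_mul (Real.abs_sin_le_one t) (hqb ξ) (abs_nonneg _) zero_le_one
    linarith
  have hgb' : ∀ ξ t, |g' ξ t| ≤ 2 * ‖v ξ‖ := by
    intro ξ t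
    refine (abs_add_le _ _).trans ?_
    rw [abs_mul, abs_mul, abs_neg]
    have := mul_le_mul (Real.abs_sin_le_one t) (hpb ξ) (abs_nonneg _) zero_le_one
    have := mul_le_mul (Real.abs_cos_le_one t) (hqb ξ) (abs_nonneg _) zero_le_one
    linarith
  have hWn : ∀ ξ, ‖W ξ‖ = 2 * Real.pi * ‖ξ‖ := by
    intro ξ
    simp only [W, norm_smul]
    rw [Real.norm_eq_abs, abs_of_pos (by positivity)]
  let B : E → ℝ := fun ξ => 4 * Real.pi * (‖ξ‖ ^ 1 * ‖v ξ‖)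
  have hhb' : ∀ x ξ, ‖h' x ξ‖ ≤ B ξ := by
    intro x ξ
    simp only [h', B]
    rw [norm_smul, innerSL_apply_norm, hWn, Real.norm_eq_abs]
    calc _ ≤ (2 * ‖v ξ‖) * (2 * Real.pi * ‖ξ‖) := by gcongr; exact hgb' _ _
      _ = _ := by ring
  have hBi : Integrable B := (v.integrable_pow_mul volume 1).const_mul _
  have hvi : Integrable (fun ξ => 2 * ‖v ξ‖) := (v.integrable (μ := volume)).norm.const_mul 2
  have hhi : ∀ x, Integrable (h x) := fun x =>
    hvi.mono' ((hcont.comp (by fun_prop : Continuous fun ξ : E => (ξ, x))).aestronglyMeasurable)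
      (ae_of_all _ fun ξ => hgb _ _)
  have hhm' : ∀ x, AEStronglyMeasurable (h' x) volume := fun x =>
    (hcont'.comp (by fun_prop : Continuous fun ξ : E => (ξ, x))).aestronglyMeasurable
  have hhi' : ∀ x, Integrable (h' x) := fun x =>
    hBi.mono' (hhm' x) (ae_of_all _ fun ξ => hhb' _ _)
  have hux : ∀ x, u x = ∫ ξ, h x ξ := by
    intro x
    have h1 : ((u x : ℝ) : ℂ) = 𝓕 (v : E → ℂ) x := by
      rw [← SchwartzMap.fourier_coe, hvU]; rfl
    have hi : Integrable (fun ξ => Complex.exp (↑(-2 * Real.pi * ⟪ξ, x⟫) * Complex.I) • v ξ) := by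
      refine (v.integrable (μ := volume)).norm.mono' ?_ ?_
      · refine Continuous.aestronglyMeasurable ?_
        have := v.continuous
        fun_prop
      · refine ae_of_all _ fun ξ => ?_
        rw [norm_smul, Complex.norm_exp_ofReal_mul_I, one_mul]
    rw [Real.fourier_eq'] at h1
    have h2 := congrArg Complex.re h1
    rw [Complex.ofReal_re] at h2
    rw [h2]
    refine (integral_re hi).symm.trans (integral_congr_ae (ae_of_all _ fun ξ => ?_))
    have e1 : ⟪W ξ, x⟫ = 2 * Real.pi * ⟪ξ, x⟫ := by simp [W, inner_smul_left]
    simp only [h, g, p, q, e1]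
    rw [show (-2 * Real.pi * ⟪ξ, x⟫) = -(2 * Real.pi * ⟪ξ, x⟫) by ring]
    generalize 2 * Real.pi * ⟪ξ, x⟫ = t
    simp only [smul_eq_mul, RCLike.re_eq_complex_re, Complex.mul_re, Complex.exp_ofReal_mul_I_re,
      Complex.exp_ofReal_mul_I_im, Real.cos_neg, Real.sin_neg]
    ring
  have hux' : ∀ x, fderiv ℝ u x = ∫ ξ, h' x ξ := by
    intro x
    have := hasFDerivAt_integral_of_dominated_of_fderiv_le (μ := (volume : Measure E))
      (F := h) (F' := h') (x₀ := x) (bound := B) (s := Set.univ) Filter.univ_mem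
      (Filter.Eventually.of_forall fun y => (hhi y).aestronglyMeasurable) (hhi x) (hhm' x)
      (ae_of_all _ fun ξ y _ => hhb' y ξ) hBi (ae_of_all _ fun ξ y _ => hh' y ξ)
    rw [show u = fun x => ∫ ξ, h x ξ from funext hux]
    exact this.fderiv
  have hcontk : Continuous (fun z : E × E => k z.2 z.1) := by
    simp only [k, g']; fun_prop
  have hkb : ∀ x ξ, ‖k x ξ‖ ≤ B ξ := by
    intro x ξ
    refine le_trans (le_of_eq ?_) (hhb' x ξ)
    refine (norm_smul (g' ξ ⟪W ξ, x⟫) (W ξ)).trans ?_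
    refine Eq.trans ?_ (norm_smul (g' ξ ⟪W ξ, x⟫) (innerSL ℝ (W ξ) : E →L[ℝ] ℝ)).symm
    rw [innerSL_apply_norm]
  have hki : ∀ x, Integrable (k x) := fun x =>
    hBi.mono' ((hcontk.comp (by fun_prop : Continuous fun ξ : E => (ξ, x))).aestronglyMeasurable)
      (ae_of_all _ fun ξ => hkb _ _)
  have hkx : ∀ x, innerSL ℝ (∫ ξ, k x ξ) = fderiv ℝ u x := by
    intro x
    rw [hux']
    ext y
    rw [ContinuousLinearMap.integral_apply (hhi' x), innerSL_apply_apply, real_inner_comm,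
      ← integral_inner (hki x)]
    refine integral_congr_ae (ae_of_all _ fun ξ => ?_)
    simp [h', k, inner_smul_right, real_inner_comm]
  -- the Banach space valued integrand
  let F : E → C(Metric.closedBall (0 : E) r, ℝ × E) := fun ξ =>
    ⟨fun x => (h x ξ, k x ξ), by
      have h1 := hcont.comp (by fun_prop : Continuous fun x : Metric.closedBall (0 : E) r => (ξ, (x : E)))
      have h2 := hcontk.comp (by fun_prop : Continuous fun x : Metric.closedBall (0 : E) r => (ξ, (x : E)))
      exact h1.prodMk h2⟩
  have hFc : Continuous F := by
    refine ContinuousMap.continuous_of_continuous_uncurry _ ?_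
    have h1 := hcont.comp (by fun_prop : Continuous fun z : E × Metric.closedBall (0 : E) r => (z.1, (z.2 : E)))
    have h2 := hcontk.comp (by fun_prop : Continuous fun z : E × Metric.closedBall (0 : E) r => (z.1, (z.2 : E)))
    exact h1.prodMk h2
  have hFi : Integrable F := by
    refine (hvi.add hBi).mono' hFc.aestronglyMeasurable (ae_of_all _ fun ξ => ?_)
    have hB0 : 0 ≤ B ξ := (norm_nonneg _).trans (hhb' 0 ξ)
    have hv0 : 0 ≤ 2 * ‖v ξ‖ := by positivity
    rw [ContinuousMap.norm_le _ (by simp only [Pi.add_apply]; linarith)]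
    intro x
    refine (norm_prod_le_iff).2 ⟨?_, ?_⟩
    · exact (hgb _ _ : |h x ξ| ≤ _).trans (by simp only [Pi.add_apply]; linarith)
    · exact (hkb x ξ).trans (by simp only [Pi.add_apply]; linarith)
  have hFS : ∀ ξ, F ξ ∈ apS (E := E) r := by
    intro ξ ε hε
    obtain ⟨ψ, hψ, hae⟩ := approx_ridge (g ξ) (g' ξ) (hg ξ) (by simp only [g']; fun_prop) r hr (W ξ)
      ε hε
    refine ⟨ψ, hψ, ?_⟩
    filter_upwards [hae] with x hx hxK
    have e : innerSL ℝ (F ξ ⟨x, hxK⟩).2 = g' ξ ⟪W ξ, x⟫ • (innerSL ℝ (W ξ) : E →L[ℝ] ℝ) := by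
      ext y; simp [F, k]
    rw [e]
    exact hx hxK
  have hmem := integral_mem_closed _ (apS_closed (E := E) r) F hFS
  intro ε hε
  obtain ⟨ψ, hψ, hae⟩ := hmem ε hε
  refine ⟨ψ, hψ, ?_⟩
  filter_upwards [hae] with x hx hxK
  have e : (∫ ξ, F ξ) ⟨x, hxK⟩ = (u x, ∫ ξ, k x ξ) := by
    rw [ContinuousMap.integral_apply hFi, hux]
    exact integral_pair (hhi x) (hki x)
  have := hx hxK
  rw [e, hkx] at this
  exact this

open scoped Convolution in
lemma exists_mollify (g : E → ℝ) (hg : ContDiff ℝ 1 g) (hc : HasCompactSupport g)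
    (ε : ℝ) (hε : 0 < ε) : ∃ u : E → ℝ, ContDiff ℝ (⊤ : ℕ∞) u ∧ HasCompactSupport u ∧
      ∀ x, |u x - g x| ≤ ε ∧ ‖fderiv ℝ u x - fderiv ℝ g x‖ ≤ ε := by
  have hg' : Continuous (fderiv ℝ g) := hg.continuous_fderiv one_ne_zero
  have u1 : UniformContinuous g := hc.uniformContinuous_of_continuous hg.continuous
  have u2 : UniformContinuous (fderiv ℝ g) :=
    (hc.fderiv ℝ).uniformContinuous_of_continuous hg'
  obtain ⟨δ1, hδ1, H1⟩ := Metric.uniformContinuous_iff.1 u1 ε hε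
  obtain ⟨δ2, hδ2, H2⟩ := Metric.uniformContinuous_iff.1 u2 ε hε
  have hδ : 0 < min δ1 δ2 := lt_min hδ1 hδ2
  let φ : ContDiffBump (0 : E) := ⟨min δ1 δ2 / 2, min δ1 δ2, by positivity, by linarith⟩
  have hgl : LocallyIntegrable g (volume : Measure E) := hg.continuous.locallyIntegrable
  have hφl : LocallyIntegrable (φ.normed volume) (volume : Measure E) :=
    φ.continuous_normed.locallyIntegrable
  refine ⟨φ.normed volume ⋆[ContinuousLinearMap.lsmul ℝ ℝ, volume] g, ?_, ?_, fun x => ⟨?_, ?_⟩⟩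
  · exact φ.hasCompactSupport_normed.contDiff_convolution_left _ φ.contDiff_normed hgl
  · exact φ.hasCompactSupport_normed.convolution _ hc
  · refine φ.dist_normed_convolution_le hg.continuous.aestronglyMeasurable fun y hy => (H1 ?_).le
    exact (Metric.mem_ball.1 hy).trans_le (min_le_left _ _)
  · rw [(hc.hasFDerivAt_convolution_right (ContinuousLinearMap.lsmul ℝ ℝ) hφl hg x).fderiv]
    have := φ.dist_normed_convolution_le (μ := (volume : Measure E)) (x₀ := x)
      hg'.aestronglyMeasurable (ε := ε) fun y hy =>
      (H2 ((Metric.mem_ball.1 hy).trans_le (min_le_right _ _))).le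
    rw [dist_eq_norm] at this
    exact this

lemma exists_cutoff (D W : Set E) (hD : Bornology.IsBounded D) (hW : IsOpen W)
    (hDW : closure D ⊆ W) (f : E → ℝ) (hf : ContDiffOn ℝ 1 f W) :
    ∃ g : E → ℝ, ContDiff ℝ 1 g ∧ HasCompactSupport g ∧ ∀ x ∈ D, g =ᶠ[nhds x] f := by
  have : ProperSpace E := FiniteDimensional.proper_real E
  have hK : IsCompact (closure D) := hD.isCompact_closure
  obtain ⟨t, ht, hDt, htW⟩ := exists_compact_between hK hW hDW
  obtain ⟨χ, h1, h0, -⟩ := exists_contMDiffMap_one_nhds_of_subset_interior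
    (modelWithCornersSelf ℝ E) (n := 1) isClosed_closure hDt
  have hχ : ContDiff ℝ 1 χ := χ.contMDiff.contDiff
  have hts : tsupport (fun x => χ x * f x) ⊆ t := by
    refine closure_minimal (fun x hx => ?_) ht.isClosed
    by_contra hxt
    exact hx (by simp [h0 x hxt])
  refine ⟨fun x => χ x * f x, ?_, ?_, ?_⟩
  · rw [contDiff_iff_contDiffAt]
    intro x
    by_cases hx : x ∈ t
    · exact hχ.contDiffAt.mul (hf.contDiffAt (hW.mem_nhds (htW hx)))
    · refine (contDiffAt_const (c := (0 : ℝ))).congr_of_eventuallyEq ?_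
      filter_upwards [ht.isClosed.isOpen_compl.mem_nhds hx] with y hy
      simp [h0 y hy]
  · exact HasCompactSupport.intro ht fun x hx => by simp [h0 x hx]
  · intro x hx
    have := Filter.Eventually.filter_mono (nhds_le_nhdsSet (subset_closure hx)) h1
    filter_upwards [this] with y hy
    simp [hy]

end General

/-- **Lemma (shallow ReLU approximation in `W^{1,∞}`).**
Let `D ⊆ ℝ^d` be a bounded Lipschitz domain. For every `f ∈ C^1(D̄)` (i.e. `f` is `C^1`
on an open neighborhood of the closure of `D`) and every `ε > 0`, there is a shallow
ReLU network `ψ(x) = ∑_{j=1}^N a_j σ(⟪w_j, x⟫ + b_j)` with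
`‖ψ - f‖_{W^{1,∞}(D)} = ‖ψ - f‖_{L^∞(D)} + ess sup_{x∈D} |∇(ψ-f)(x)| ≤ ε`. -/
theorem shallow_relu_W1inf_approx
    (d : ℕ) (hd : 1 ≤ d)
    (Dset : Set (EuclideanSpace ℝ (Fin d)))
    (hDo : IsOpen Dset) (hDb : Bornology.IsBounded Dset) (hDne : Dset.Nonempty)
    (f : EuclideanSpace ℝ (Fin d) → ℝ)
    (hf : ∃ W : Set (EuclideanSpace ℝ (Fin d)),
      IsOpen W ∧ closure Dset ⊆ W ∧ ContDiffOn ℝ 1 f W)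
    (ε : ℝ) (hε : 0 < ε) :
    ∃ (N : ℕ) (a : Fin N → ℝ) (w : Fin N → EuclideanSpace ℝ (Fin d)) (b : Fin N → ℝ),
      essSup
          (fun x => ENNReal.ofReal |(∑ j, a j * relu (⟪w j, x⟫ + b j)) - f x|)
          (volume.restrict Dset)
        + essSup
            (fun x => ENNReal.ofReal
              ‖fderiv ℝ (fun y => (∑ j, a j * relu (⟪w j, y⟫ + b j)) - f y) x‖)
            (volume.restrict Dset)
      ≤ ENNReal.ofReal ε := by
  obtain ⟨W, hW, hDW, hfW⟩ := hf
  obtain ⟨g, hg, hgc, hgf⟩ := exists_cutoff Dset W hDb hW hDW f hfW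
  obtain ⟨r, hr, hDr⟩ := hDb.subset_closedBall_lt 0 0
  have happ : Approx (Metric.closedBall 0 r) g (fderiv ℝ g) := by
    refine approx_of_limit fun e he => ?_
    obtain ⟨u, hu, huc, H⟩ := exists_mollify g hg hgc e he
    exact ⟨u, fderiv ℝ u, approx_smooth u hu huc r hr, fun x _ => H x⟩
  obtain ⟨ψ, hψ, hae⟩ := happ (ε / 2) (by positivity)
  obtain ⟨N, a, s, hs⟩ := Submodule.mem_span_set'.1 hψ
  choose p hp using fun j => (s j).2
  have hψ' : ∀ y, (∑ j, a j * relu (⟪(p j).1, y⟫ + (p j).2)) = ψ y := by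
    intro y
    rw [← hs, Finset.sum_apply]
    refine Finset.sum_congr rfl fun j _ => ?_
    rw [Pi.smul_apply, ← hp j]
    rfl
  refine ⟨N, a, fun j => (p j).1, fun j => (p j).2, ?_⟩
  simp only [hψ']
  have hD : ∀ᵐ x ∂(volume.restrict Dset), |ψ x - f x| ≤ ε / 2 ∧
      ‖fderiv ℝ (fun y => ψ y - f y) x‖ ≤ ε / 2 := by
    rw [ae_restrict_iff' hDo.measurableSet]
    filter_upwards [hae] with x hx hxD
    obtain ⟨h1, L, hL, h2⟩ := hx (hDr hxD)
    have hfx := hgf x hxD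
    refine ⟨by rw [← hfx.eq_of_nhds]; exact h1, ?_⟩
    have hfd : HasFDerivAt f (fderiv ℝ g x) x :=
      ((hg.differentiable one_ne_zero) x).hasFDerivAt.congr_of_eventuallyEq hfx.symm
    have h3 : fderiv ℝ (fun y => ψ y - f y) x = L - fderiv ℝ g x := (hL.sub hfd).fderiv
    rw [h3]
    exact h2
  have e : ENNReal.ofReal ε = ENNReal.ofReal (ε / 2) + ENNReal.ofReal (ε / 2) := by
    rw [← ENNReal.ofReal_add (by positivity) (by positivity)]; congr 1; ring
  rw [e]
  refine add_le_add (essSup_le_of_ae_le _ ?_) (essSup_le_of_ae_le _ ?_)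
  · filter_upwards [hD] with x hx using ENNReal.ofReal_le_ofReal hx.1
  · filter_upwards [hD] with x hx using ENNReal.ofReal_le_ofReal hx.2

end
end
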